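/- arXiv:1602.03479 — 3 statements merged into one kernel-verified Lean document; each statement's English description precedes it below -/
import Mathlib

section
/- Let L be a finite-dimensional real Lie algebra whose Killing form is negative definite. Then every element x of L is a commutator: there exist a, b ∈ L such that x = ⁅a, b⁆. -/
/-!
Put an `ad`-invariant inner product on `L` and let `T` be the centralizer of an element `h` for
which `T` is abelian. Since `ad h` is skew, its range is `Tᗮ`, so it suffices to move `x` into `Tᗮ`
by an isometric automorphism. These form a compact group; let `y` be a point of the orbit of `x`
whose projection `z` onto `T` has least norm. Along the curves `exp (t • ad n) y`, the first-order
condition at the minimum gives `⁅z, y⁆ = 0`, and the second-order condition for `n = ⁅z, m⁆` gives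
`⟪⁅z, n⁆, ⁅y, n⁆⟫ ≤ 0`, first for these `n` and then, since `ad y` commutes with the skew map
`ad z`, for all `n`. Summing over an orthonormal basis, `κ(z, z) = κ(z, y) ≥ 0` for the Killing
form `κ`. As `κ(z, z) = -‖ad z‖²` in the Hilbert–Schmidt norm, `z` is central, and it vanishes when
`x` lies in `⁅L, L⁆`, which is orthogonal to the center.
-/

open scoped InnerProductSpace Topology
open NormedSpace (exp)
open LieAlgebra (ad center)

theorem deriv_deriv_nonneg_of_isLocalMin {f : ℝ → ℝ} {a : ℝ} (hmin : IsLocalMin f a)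
    (hf : ContinuousAt f a) : 0 ≤ deriv (deriv f) a := by
  by_contra! hneg
  have hmax : IsLocalMax f a := isLocalMax_of_deriv_deriv_neg hneg hmin.deriv_eq_zero hf
  have hconst : f =ᶠ[𝓝 a] fun _ ↦ f a := by
    filter_upwards [hmin, hmax] with t hle hge using le_antisymm hge hle
  have hzero : deriv (deriv f) a = 0 := by simpa using hconst.deriv.deriv_eq
  exact hneg.ne hzero

section LinearFlow

variable {E : Type*} [NormedAddCommGroup E] [NormedSpace ℝ E] [CompleteSpace E]

theorem hasDerivAt_exp_smul_apply (A : E →L[ℝ] E) (v : E) (t : ℝ) :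
    HasDerivAt (fun s : ℝ ↦ exp (s • A) v) (A (exp (t • A) v)) t := by
  simpa using (hasDerivAt_exp_smul_const' (𝕂 := ℝ) A t).clm_apply (hasDerivAt_const t v)

theorem eq_exp_smul_apply_of_hasDerivAt {A : E →L[ℝ] E} {u : ℝ → E}
    (hu : ∀ t, HasDerivAt u (A (u t)) t) (t : ℝ) : u t = exp (t • A) (u 0) := by
  have hunique : u = fun s : ℝ ↦ exp (s • A) (u 0) :=
    ODE_solution_unique_univ (v := fun _ ↦ A) (s := fun _ ↦ Set.univ) (t₀ := 0)
      (fun _ ↦ A.lipschitz.lipschitzOnWith) (fun t ↦ ⟨hu t, Set.mem_univ _⟩)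
      (fun t ↦ ⟨hasDerivAt_exp_smul_apply A (u 0) t, Set.mem_univ _⟩) (by simp)
  exact congrFun hunique t

theorem exp_apply_bilin_of_derivation {D : E →L[ℝ] E} {B : E →L[ℝ] E →L[ℝ] E}
    (hD : ∀ a b, D (B a b) = B (D a) b + B a (D b)) (a b : E) :
    exp D (B a b) = B (exp D a) (exp D b) := by
  have hflow (t : ℝ) : HasDerivAt (fun s : ℝ ↦ B (exp (s • D) a) (exp (s • D) b))
      (D (B (exp (t • D) a) (exp (t • D) b))) t := by
    rw [hD]
    exact (B.hasFDerivAt.comp_hasDerivAt t (hasDerivAt_exp_smul_apply D a t)).clm_apply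
      (hasDerivAt_exp_smul_apply D b t)
  simpa using (eq_exp_smul_apply_of_hasDerivAt hflow 1).symm

end LinearFlow

section NormMinimum

variable {F : Type*} [NormedAddCommGroup F] {u : ℝ → F} {a : ℝ}

theorem isLocalMin_norm_sq (hmin : IsLocalMin (‖u ·‖) a) : IsLocalMin (‖u ·‖ ^ 2) a :=
  hmin.mono fun _ ht ↦ pow_le_pow_left₀ (norm_nonneg _) ht 2

variable [InnerProductSpace ℝ F]

theorem inner_deriv_eq_zero_of_isLocalMin_norm {u' : F} (hu : HasDerivAt u u' a)
    (hmin : IsLocalMin (‖u ·‖) a) : ⟪u a, u'⟫_ℝ = 0 := by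
  simpa using (isLocalMin_norm_sq hmin).hasDerivAt_eq_zero hu.norm_sq

theorem norm_sq_add_inner_nonneg_of_isLocalMin_norm {u' : ℝ → F} {u'' : F}
    (hu : ∀ t, HasDerivAt u (u' t) t) (hu' : HasDerivAt u' u'' a) (hmin : IsLocalMin (‖u ·‖) a) :
    0 ≤ ‖u' a‖ ^ 2 + ⟪u a, u''⟫_ℝ := by
  have hfirst (t : ℝ) := (hu t).norm_sq
  have hsecond := ((hu a).inner ℝ hu').const_mul 2
  have hnonneg := deriv_deriv_nonneg_of_isLocalMin (isLocalMin_norm_sq hmin)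
    (hfirst a).continuousAt
  rw [funext fun t ↦ (hfirst t).deriv, hsecond.deriv, real_inner_self_eq_norm_sq] at hnonneg
  linarith

end NormMinimum

theorem inner_starProjection_starProjection {𝕜 E : Type*} [RCLike 𝕜] [NormedAddCommGroup E]
    [InnerProductSpace 𝕜 E] (K : Submodule 𝕜 E) [K.HasOrthogonalProjection] (v w : E) :
    ⟪K.starProjection v, K.starProjection w⟫_𝕜 = ⟪K.starProjection v, w⟫_𝕜 := by
  rw [← K.inner_starProjection_left_eq_right,
    K.starProjection_eq_self_iff.2 (K.starProjection_apply_mem v)]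

section LieAlgebra

variable {R L : Type*} [CommRing R] [LieRing L] [LieAlgebra R L]

theorem lieHom_mem_lie_top_top {L' : Type*} [LieRing L'] [LieAlgebra R L'] (φ : L →ₗ⁅R⁆ L') {x : L}
    (hx : x ∈ ⁅(⊤ : LieIdeal R L), (⊤ : LieIdeal R L)⁆) :
    φ x ∈ ⁅(⊤ : LieIdeal R L'), (⊤ : LieIdeal R L')⁆ :=
  LieSubmodule.mono_lie le_top le_top (LieIdeal.map_bracket_le φ (LieIdeal.mem_map hx))

theorem killingForm_lie_eq_zero_of_lie_eq_zero {a z : L} (h : ⁅a, z⁆ = 0) (m : L) :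
    killingForm R L z ⁅a, m⁆ = 0 := by
  rw [← LieModule.traceForm_apply_lie_apply, ← lie_skew, h, neg_zero, map_zero,
    LinearMap.zero_apply]

theorem isKilling_of_forall_killingForm_self_ne_zero
    (h : ∀ x : L, x ≠ 0 → killingForm R L x x ≠ 0) : LieAlgebra.IsKilling R L where
  killingCompl_top_eq_bot := by
    rw [LieSubmodule.eq_bot_iff]
    intro x hx
    by_contra hne
    exact h x hne ((LieIdeal.mem_killingCompl R L ⊤).1 hx x trivial)

theorem lie_top_top_eq_top_of_isSemisimple [LieAlgebra.IsSemisimple R L] :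
    ⁅(⊤ : LieIdeal R L), (⊤ : LieIdeal R L)⁆ = ⊤ := by
  obtain ⟨I, hI⟩ := exists_isCompl ⁅(⊤ : LieIdeal R L), (⊤ : LieIdeal R L)⁆
  have habelian : ⁅I, I⁆ = ⊥ :=
    le_bot_iff.1 <| hI.inf_eq_bot ▸ le_inf (LieSubmodule.mono_lie le_top le_top)
      (LieSubmodule.lie_le_left I I)
  have hbot : I = ⊥ := by
    have := (LieSubmodule.lie_abelian_iff_lie_self_eq_bot I).2 habelian
    exact (LieAlgebra.hasTrivialRadical_iff_no_abelian_ideals R L).1 inferInstance I this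
  simpa [hbot] using hI.sup_eq_top

end LieAlgebra

/-- A real Lie algebra with an `ad`-invariant inner product; in finite dimension, a compact Lie
algebra. The norm and the bracket are bundled in one class so that they share the same additive
group. -/
class EuclideanLieAlgebra (L : Type*) extends NormedAddCommGroup L, LieRing L,
    InnerProductSpace ℝ L, LieAlgebra ℝ L where
  inner_lie_left (a b c : L) : ⟪⁅a, b⁆, c⟫_ℝ = -⟪b, ⁅a, c⁆⟫_ℝ

namespace EuclideanLieAlgebra

/-- The Euclidean structure on a Lie algebra given by a positive definite invariant bilinear form;
the additive group, scalar multiplication and bracket are definitionally the original ones. -/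
@[reducible] noncomputable def ofBilinForm {L : Type*} [LieRing L] [LieAlgebra ℝ L]
    (B : LinearMap.BilinForm ℝ L) (hsymm : B.IsSymm) (hpos : ∀ x, x ≠ 0 → 0 < B x x)
    (hinv : B.lieInvariant L) : EuclideanLieAlgebra L :=
  let core : InnerProductSpace.Core ℝ L :=
    { inner := fun a b ↦ B a b
      conj_inner_symm := fun a b ↦ hsymm.eq b a
      re_inner_nonneg := fun a ↦ by
        obtain rfl | ha := eq_or_ne a 0
        · simp
        · exact (hpos a ha).le
      add_left := fun a b c ↦ by simp
      smul_left := fun a b r ↦ by simp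
      definite := fun a ha ↦ of_not_not fun hne ↦ (hpos a hne).ne' ha }
  { core.toNormedAddCommGroup, ‹LieRing L›, ‹LieAlgebra ℝ L›,
      @InnerProductSpace.ofCore ℝ L _ _ _ core.toCore with
    inner_lie_left := fun a b c ↦ hinv a b c }

variable {L : Type*} [EuclideanLieAlgebra L]

theorem lie_eq_zero_of_lie_lie_eq_zero {a b : L} (h : ⁅a, ⁅a, b⁆⁆ = 0) : ⁅a, b⁆ = 0 := by
  rw [← inner_self_eq_zero (𝕜 := ℝ), inner_lie_left, h, inner_zero_right, neg_zero]

theorem lie_eq_zero_of_ad_pow_eq_zero {a b : L} {n : ℕ} (h : (ad ℝ L a ^ n) b = 0) :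
    ⁅a, b⁆ = 0 := by
  induction n generalizing b with
  | zero => simp_all
  | succ n ih => exact lie_eq_zero_of_lie_lie_eq_zero (ih (by simpa [pow_succ] using h))

theorem exists_forall_lie_eq_zero_of_lie_eq_zero [FiniteDimensional ℝ L] :
    ∃ h : L, ∀ a b : L, ⁅h, a⁆ = 0 → ⁅h, b⁆ = 0 → ⁅a, b⁆ = 0 := by
  -- A Cartan subalgebra is nilpotent, and a skew operator that is nilpotent at a vector kills it.
  obtain ⟨h, hcartan⟩ := LieAlgebra.exists_isCartanSubalgebra_engel ℝ L
  refine ⟨h, fun a b ha hb ↦ ?_⟩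
  let H := LieSubalgebra.engel ℝ h
  have mem_engel {c : L} (hc : ⁅h, c⁆ = 0) : c ∈ H :=
    (LieSubalgebra.mem_engel_iff ℝ h c).2 ⟨1, by simpa using hc⟩
  obtain ⟨n, hn⟩ := LieModule.exists_forall_pow_toEnd_eq_zero (R := ℝ) (L := H) (M := H)
  apply lie_eq_zero_of_ad_pow_eq_zero (n := n)
  have hpow := LieSubalgebra.coe_ad_pow ℝ L H ⟨a, mem_engel ha⟩ ⟨b, mem_engel hb⟩ n
  simpa [LieAlgebra.ad, hn] using hpow.symm

theorem inner_eq_zero_of_mem_center {c x : L} (hc : c ∈ center ℝ L)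
    (hx : x ∈ ⁅(⊤ : LieIdeal ℝ L), (⊤ : LieIdeal ℝ L)⁆) : ⟪c, x⟫_ℝ = 0 := by
  rw [← LieSubmodule.mem_toSubmodule, LieSubmodule.lieIdeal_oper_eq_linear_span'] at hx
  induction hx using Submodule.span_induction with
  | mem x hx =>
    obtain ⟨a, -, b, -, rfl⟩ := hx
    rw [← neg_eq_zero, real_inner_comm, inner_lie_left, neg_neg, hc a, inner_zero_right]
  | zero => exact inner_zero_right c
  | add x y _ _ hx hy => rw [inner_add_right, hx, hy, add_zero]
  | smul r x _ hx => rw [real_inner_smul_right, hx, mul_zero]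

theorem killingForm_eq_neg_sum_inner {ι : Type*} [Fintype ι] (b : OrthonormalBasis ι ℝ L)
    (x y : L) : killingForm ℝ L x y = -∑ i, ⟪⁅x, b i⁆, ⁅y, b i⁆⟫_ℝ := by
  rw [killingForm_apply_apply, LinearMap.trace_eq_sum_inner _ b, ← Finset.sum_neg_distrib]
  simp [inner_lie_left]

theorem starProjection_lie_lie_eq_zero {T : Submodule ℝ L} [T.HasOrthogonalProjection] {y z : L}
    (hzT : ∀ k ∈ T, ⁅z, k⁆ = 0) (hzy : ⁅z, y⁆ = 0) (m : L) : T.starProjection ⁅⁅z, m⁆, y⁆ = 0 := by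
  rw [Submodule.starProjection_apply_eq_zero_iff, Submodule.mem_orthogonal']
  intro k hk
  rw [lie_lie, hzy, lie_zero, sub_zero, inner_lie_left, hzT k hk, inner_zero_right, neg_zero]

section FiniteDimensional

variable [FiniteDimensional ℝ L]

theorem adjoint_ad (a : L) : (ad ℝ L a).adjoint = -ad ℝ L a :=
  Eq.symm <| (LinearMap.eq_adjoint_iff _ _).2 fun b c ↦ by
    rw [LinearMap.neg_apply, LieAlgebra.ad_apply, LieAlgebra.ad_apply, inner_neg_left,
      inner_lie_left, neg_neg]

theorem orthogonal_ker_ad (a : L) : (ad ℝ L a).kerᗮ = (ad ℝ L a).range := by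
  rw [LinearMap.orthogonal_ker, adjoint_ad, LinearMap.range_neg]

theorem exists_eq_add_lie (a n : L) : ∃ k m : L, ⁅a, k⁆ = 0 ∧ n = k + ⁅a, m⁆ := by
  obtain ⟨k, hk, r, hr, hn⟩ := (ad ℝ L a).ker.exists_add_mem_mem_orthogonal n
  rw [orthogonal_ker_ad] at hr
  obtain ⟨m, rfl⟩ := hr
  exact ⟨k, m, hk, hn⟩

theorem mem_center_of_killingForm_self_nonneg {z : L} (hz : 0 ≤ killingForm ℝ L z z) :
    z ∈ center ℝ L := by
  let b := stdOrthonormalBasis ℝ L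
  have hsum : ∑ i, ⟪⁅z, b i⁆, ⁅z, b i⁆⟫_ℝ = 0 :=
    le_antisymm (by rwa [killingForm_eq_neg_sum_inner b, neg_nonneg] at hz)
      (Finset.sum_nonneg fun _ _ ↦ real_inner_self_nonneg)
  have had : ad ℝ L z = 0 := b.toBasis.ext fun i ↦ by
    simpa using (Finset.sum_eq_zero_iff_of_nonneg fun _ _ ↦ real_inner_self_nonneg).1 hsum i
  intro a
  rw [← lie_skew, ← LieAlgebra.ad_apply ℝ, had, LinearMap.zero_apply, neg_zero]

theorem inner_lie_lie_nonpos_of_forall_range {z y : L} (hzy : ⁅z, y⁆ = 0)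
    (hrange : ∀ m : L, ⟪⁅z, ⁅z, m⁆⁆, ⁅y, ⁅z, m⁆⁆⟫_ℝ ≤ 0) (n : L) :
    ⟪⁅z, n⁆, ⁅y, n⁆⟫_ℝ ≤ 0 := by
  obtain ⟨k, m, hk, rfl⟩ := exists_eq_add_lie z n
  have hcross : ⟪⁅z, ⁅z, m⁆⁆, ⁅y, k⁆⟫_ℝ = 0 := by
    rw [inner_lie_left, leibniz_lie, hzy, hk, zero_lie, lie_zero, add_zero, inner_zero_right,
      neg_zero]
  rw [lie_add, lie_add, hk, zero_add, inner_add_right, hcross, zero_add]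
  exact hrange m

end FiniteDimensional

section Isometric

variable (L) in
/-- The monoid of isometric Lie algebra endomorphisms. In finite dimension these are automorphisms;
they are taken among the continuous linear maps so as to use the operator norm topology. -/
def isometricEnd : Submonoid (L →L[ℝ] L) where
  carrier := {g | (∀ a b, g ⁅a, b⁆ = ⁅g a, g b⁆) ∧ ∀ a, ‖g a‖ = ‖a‖}
  one_mem' := ⟨fun _ _ ↦ rfl, fun _ ↦ rfl⟩
  mul_mem' := fun {f g} hf hg ↦
    ⟨fun a b ↦ by simp [hf.1, hg.1], fun a ↦ by simp [hf.2, hg.2]⟩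

variable {g : L →L[ℝ] L}

theorem injective_of_mem_isometricEnd (hg : g ∈ isometricEnd L) : Function.Injective g :=
  (AddMonoidHomClass.isometry_of_norm g hg.2).injective

variable [FiniteDimensional ℝ L]

theorem surjective_of_mem_isometricEnd (hg : g ∈ isometricEnd L) : Function.Surjective g :=
  LinearMap.surjective_of_injective (f := g.toLinearMap) (injective_of_mem_isometricEnd hg)

variable (L) in
/-- The Lie bracket as a continuous bilinear map, i.e. `ad` with values in the Banach algebra of
continuous endomorphisms, where its exponential is defined. -/
noncomputable def lieCLM : L →L[ℝ] L →L[ℝ] L :=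
  LinearMap.toContinuousBilinearMap (LieModule.toEnd ℝ L L : L →ₗ[ℝ] L →ₗ[ℝ] L)

@[simp]
theorem lieCLM_apply (a b : L) : lieCLM L a b = ⁅a, b⁆ := rfl

theorem exp_lieCLM_mem_isometricEnd (a : L) : exp (lieCLM L a) ∈ isometricEnd L := by
  have : CompleteSpace L := FiniteDimensional.complete ℝ L
  refine ⟨fun b c ↦ exp_apply_bilin_of_derivation (B := lieCLM L) (leibniz_lie a) b c, fun b ↦ ?_⟩
  apply ContinuousLinearMap.norm_map_of_mem_unitary
  let +nondep : NormedAlgebra ℚ (L →L[ℝ] L) := .restrictScalars ℚ ℝ _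
  apply NormedSpace.exp_mem_unitary_of_mem_skewAdjoint
  rw [skewAdjoint.mem_iff, eq_comm]
  refine (ContinuousLinearMap.eq_adjoint_iff _ _).2 fun b c ↦ ?_
  rw [neg_apply, lieCLM_apply, lieCLM_apply, inner_neg_left, inner_lie_left,
    neg_neg]

theorem isCompact_isometricEnd : IsCompact (isometricEnd L : Set (L →L[ℝ] L)) := by
  have : ProperSpace (L →L[ℝ] L) := FiniteDimensional.proper ℝ _
  apply Metric.isCompact_of_isClosed_isBounded
  · change IsClosed
      {g : L →L[ℝ] L | (∀ a b, g ⁅a, b⁆ = lieCLM L (g a) (g b)) ∧ ∀ a, ‖g a‖ = ‖a‖}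
    simp only [Set.ofPred_and, Set.ofPred_forall]
    exact (isClosed_iInter fun a ↦ isClosed_iInter fun b ↦
      isClosed_eq (by fun_prop) (by fun_prop)).inter
        (isClosed_iInter fun a ↦ isClosed_eq (by fun_prop) (by fun_prop))
  · refine isBounded_iff_forall_norm_le.2 ⟨1, fun g hg ↦ g.opNorm_le_bound zero_le_one fun a ↦ ?_⟩
    rw [hg.2, one_mul]

theorem exists_forall_norm_le_norm_exp {F : Type*} [NormedAddCommGroup F] [NormedSpace ℝ F]
    (P : L →L[ℝ] F) (x : L) :
    ∃ g ∈ isometricEnd L, ∀ n, ‖P (g x)‖ ≤ ‖P (exp (lieCLM L n) (g x))‖ := by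
  obtain ⟨g, hg, hmin⟩ := isCompact_isometricEnd.exists_isMinOn ⟨1, one_mem (isometricEnd L)⟩
    (f := fun g : L →L[ℝ] L ↦ ‖P (g x)‖) (by fun_prop)
  exact ⟨g, hg, fun n ↦ hmin (mul_mem (exp_lieCLM_mem_isometricEnd n) hg)⟩

end Isometric

section Minimum

variable [FiniteDimensional ℝ L] {T : Submodule ℝ L} {y : L}

theorem isLocalMin_norm_starProjection_exp_smul
    (hmin : ∀ n, ‖T.starProjection y‖ ≤ ‖T.starProjection (exp (lieCLM L n) y)‖) (n : L) :
    IsLocalMin (fun t : ℝ ↦ ‖T.starProjection (exp (t • lieCLM L n) y)‖) 0 :=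
  .of_forall fun t ↦ by simpa using hmin (t • n)

theorem hasDerivAt_clm_exp_smul_lieCLM {F : Type*} [NormedAddCommGroup F] [NormedSpace ℝ F]
    (P : L →L[ℝ] F) (n y : L) (t : ℝ) :
    HasDerivAt (fun s : ℝ ↦ P (exp (s • lieCLM L n) y)) (P ⁅n, exp (t • lieCLM L n) y⁆) t :=
  have : CompleteSpace L := FiniteDimensional.complete ℝ L
  P.hasFDerivAt.comp_hasDerivAt t (hasDerivAt_exp_smul_apply (lieCLM L n) y t)

theorem lie_starProjection_eq_zero
    (hmin : ∀ n, ‖T.starProjection y‖ ≤ ‖T.starProjection (exp (lieCLM L n) y)‖) :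
    ⁅T.starProjection y, y⁆ = 0 := by
  let n := ⁅T.starProjection y, y⁆
  have hcrit : ⟪T.starProjection y, T.starProjection ⁅n, y⁆⟫_ℝ = 0 := by
    simpa using inner_deriv_eq_zero_of_isLocalMin_norm
      (hasDerivAt_clm_exp_smul_lieCLM T.starProjection n y 0)
      (isLocalMin_norm_starProjection_exp_smul hmin n)
  rw [inner_starProjection_starProjection, ← lie_skew n y, inner_neg_right, ← inner_lie_left,
    ← lie_skew, inner_neg_left, neg_eq_zero] at hcrit
  exact inner_self_eq_zero.1 hcrit

theorem inner_lie_starProjection_le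
    (hmin : ∀ n, ‖T.starProjection y‖ ≤ ‖T.starProjection (exp (lieCLM L n) y)‖) (n : L) :
    ⟪⁅T.starProjection y, n⁆, ⁅y, n⁆⟫_ℝ ≤ ‖T.starProjection ⁅n, y⁆‖ ^ 2 := by
  have hcrit : 0 ≤ ‖T.starProjection ⁅n, y⁆‖ ^ 2 +
      ⟪T.starProjection y, T.starProjection ⁅n, ⁅n, y⁆⁆⟫_ℝ := by
    simpa using norm_sq_add_inner_nonneg_of_isLocalMin_norm
      (hasDerivAt_clm_exp_smul_lieCLM T.starProjection n y)
      (u'' := (T.starProjection ∘L lieCLM L n) ⁅n, exp ((0 : ℝ) • lieCLM L n) y⁆)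
      (hasDerivAt_clm_exp_smul_lieCLM (T.starProjection ∘L lieCLM L n) n y 0)
      (isLocalMin_norm_starProjection_exp_smul hmin n)
  have hinner : ⟪T.starProjection y, T.starProjection ⁅n, ⁅n, y⁆⁆⟫_ℝ =
      -⟪⁅T.starProjection y, n⁆, ⁅y, n⁆⟫_ℝ := by
    rw [inner_starProjection_starProjection, ← lie_skew _ n, ← lie_skew y n, inner_neg_neg,
      inner_lie_left, neg_neg]
  linarith

theorem inner_lie_starProjection_lie_nonpos
    (hmin : ∀ n, ‖T.starProjection y‖ ≤ ‖T.starProjection (exp (lieCLM L n) y)‖)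
    (hT : ∀ k ∈ T, ⁅T.starProjection y, k⁆ = 0) (n : L) :
    ⟪⁅T.starProjection y, n⁆, ⁅y, n⁆⟫_ℝ ≤ 0 := by
  have hzy := lie_starProjection_eq_zero hmin
  refine inner_lie_lie_nonpos_of_forall_range hzy (fun m ↦ ?_) n
  have hle := inner_lie_starProjection_le hmin ⁅T.starProjection y, m⁆
  rwa [starProjection_lie_lie_eq_zero hT hzy, norm_zero, zero_pow two_ne_zero] at hle

end Minimum

section Conclusion

variable [FiniteDimensional ℝ L]

theorem starProjection_mem_center {h y : L}
    (hreg : ∀ a b : L, ⁅h, a⁆ = 0 → ⁅h, b⁆ = 0 → ⁅a, b⁆ = 0)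
    (hmin : ∀ n, ‖(ad ℝ L h).ker.starProjection y‖ ≤
      ‖(ad ℝ L h).ker.starProjection (exp (lieCLM L n) y)‖) :
    (ad ℝ L h).ker.starProjection y ∈ center ℝ L := by
  set T := (ad ℝ L h).ker
  set z := T.starProjection y
  have hzT : ⁅h, z⁆ = 0 := T.starProjection_apply_mem y
  obtain ⟨m, hm⟩ : ∃ m : L, ⁅h, m⁆ = y - z := by
    have := T.sub_starProjection_mem_orthogonal y
    rwa [orthogonal_ker_ad] at this
  apply mem_center_of_killingForm_self_nonneg
  calc 0 ≤ killingForm ℝ L z y := by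
        rw [killingForm_eq_neg_sum_inner (stdOrthonormalBasis ℝ L), neg_nonneg]
        exact Finset.sum_nonpos fun i _ ↦
          inner_lie_starProjection_lie_nonpos hmin (fun k ↦ hreg z k hzT) _
    _ = killingForm ℝ L z z := by
        rw [← sub_eq_zero, ← map_sub, ← hm, killingForm_lie_eq_zero_of_lie_eq_zero hzT]

theorem exists_lie_eq {x : L} (hx : x ∈ ⁅(⊤ : LieIdeal ℝ L), (⊤ : LieIdeal ℝ L)⁆) :
    ∃ a b : L, x = ⁅a, b⁆ := by
  obtain ⟨h, hreg⟩ := exists_forall_lie_eq_zero_of_lie_eq_zero (L := L)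
  obtain ⟨g, hg, hmin⟩ := exists_forall_norm_le_norm_exp (ad ℝ L h).ker.starProjection x
  let φ : L →ₗ⁅ℝ⁆ L := { g.toLinearMap with map_lie' := hg.1 _ _ }
  have hproj : (ad ℝ L h).ker.starProjection (g x) = 0 := by
    rw [← inner_self_eq_zero (𝕜 := ℝ), inner_starProjection_starProjection]
    exact inner_eq_zero_of_mem_center (starProjection_mem_center hreg hmin)
      (lieHom_mem_lie_top_top φ hx)
  rw [Submodule.starProjection_apply_eq_zero_iff, orthogonal_ker_ad] at hproj
  obtain ⟨c, hc : ⁅h, c⁆ = g x⟩ := hproj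
  obtain ⟨a, rfl⟩ := surjective_of_mem_isometricEnd hg h
  obtain ⟨b, rfl⟩ := surjective_of_mem_isometricEnd hg c
  exact ⟨a, b, injective_of_mem_isometricEnd hg (by rw [hg.1, hc])⟩

end Conclusion

end EuclideanLieAlgebra

theorem goto_additive_general {L : Type*} [LieRing L] [LieAlgebra ℝ L] [FiniteDimensional ℝ L]
    (B : LinearMap.BilinForm ℝ L) (hsymm : B.IsSymm) (hpos : ∀ x, x ≠ 0 → 0 < B x x)
    (hinv : B.lieInvariant L) {x : L} (hx : x ∈ ⁅(⊤ : LieIdeal ℝ L), (⊤ : LieIdeal ℝ L)⁆) :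
    ∃ a b : L, x = ⁅a, b⁆ :=
  letI := EuclideanLieAlgebra.ofBilinForm B hsymm hpos hinv
  EuclideanLieAlgebra.exists_lie_eq hx

/-- Goto's theorem, additive version: in a finite-dimensional real Lie algebra whose
Killing form is negative definite, every element is a commutator. -/
theorem goto_additive (L : Type*) [LieRing L] [LieAlgebra ℝ L] [FiniteDimensional ℝ L]
    (hneg : ∀ x : L, x ≠ 0 → killingForm ℝ L x x < 0) :
    ∀ x : L, ∃ a b : L, x = ⁅a, b⁆ := by
  intro x
  have := isKilling_of_forall_killingForm_self_ne_zero fun a ha ↦ (hneg a ha).ne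
  exact goto_additive_general (-killingForm ℝ L)
    ⟨fun a b ↦ congrArg Neg.neg (LieModule.traceForm_comm ℝ L L a b)⟩
    (fun a ha ↦ neg_pos.2 (hneg a ha)) (fun a b c ↦ by simp [LieModule.traceForm_apply_lie_apply'])
    (by simp [lie_top_top_eq_top_of_isSemisimple])
end

section
/- Let L be a finite-dimensional real Lie algebra whose Killing form κ is negative definite, and let C be any Cartan subalgebra of L. Then there exists a Cartan subalgebra C′ of L orthogonal to C, i.e. κ(c, c′) = 0 for all c ∈ C and all c′ ∈ C′. -/
/-!
Let `C` be a Cartan subalgebra. Every nonzero `v ∈ C` is moved by a reflection in some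
hyperplane of `C` (a root hyperplane), realised on `C` by an inner automorphism. Composing such
reflections gives an inner automorphism `φ` preserving `C` without nonzero fixed vector in `C`. As
`φ` is orthogonal, `range (φ - 1) = (ker (φ - 1))ᗮ` contains `C`, so the fixed space of `φ` is
orthogonal to `C`.

It remains to see that a maximal abelian subspace `A` of the fixed space of `φ` is maximal abelian
in `L`. For `m` generic in `A` and small `s ≠ 0`, the fixed space of `ψ = φ exp (s ad m)` is
contained in `A`. On the other hand it has dimension at least the rank of `L`: an analytic path of
inner automorphisms joins `1` to `ψ`; near `1` its points are of the form `exp (ad x)` and fix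
`ker (ad x)`, which contains a maximal abelian subspace; and the dimension of a kernel depending
analytically on a parameter attains its generic value as its minimum.
-/

namespace OrthogonalCartan

open Module NormedSpace Filter
open scoped Topology InnerProductSpace

set_option maxSynthPendingDepth 3

section Exponential

variable {V : Type*} [NormedAddCommGroup V] [NormedSpace ℝ V]

lemma exp_apply_comm {S T : V →L[ℝ] V} (h : Commute S T) (x : V) :
    exp S (T x) = T (exp S x) :=
  DFunLike.congr_fun h.exp_left.eq x

variable [CompleteSpace V]

lemma hasDerivAt_exp_smul_apply (T : V →L[ℝ] V) (x : V) (t : ℝ) :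
    HasDerivAt (fun s : ℝ ↦ exp (s • T) x) (T (exp (t • T) x)) t := by
  simpa using (hasDerivAt_exp_smul_const' (𝕂 := ℝ) T t).clm_apply (hasDerivAt_const t x)

lemma eq_exp_smul_apply_of_hasDerivAt {T : V →L[ℝ] V} {g : ℝ → V}
    (hg : ∀ t, HasDerivAt g (T (g t)) t) (t : ℝ) : g t = exp (t • T) (g 0) :=
  congrFun (ODE_solution_unique_univ (v := fun _ ↦ T) (s := fun _ ↦ Set.univ) (t₀ := 0)
    (fun _ ↦ T.lipschitz.lipschitzOnWith) (fun t ↦ ⟨hg t, trivial⟩)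
    (fun t ↦ ⟨hasDerivAt_exp_smul_apply T (g 0) t, trivial⟩) (by simp)) t

lemma exp_apply_eq_self {T : V →L[ℝ] V} {x : V} (hx : T x = 0) : exp T x = x := by
  simpa using (eq_exp_smul_apply_of_hasDerivAt (T := T) (g := fun _ ↦ x)
    (fun t ↦ by simpa [hx] using hasDerivAt_const t x) 1).symm

lemma exp_pi_div_smul_apply_eq_neg {T : V →L[ℝ] V} {x : V} {ω : ℝ} (hω : ω ≠ 0)
    (hT : T (T x) = -ω ^ 2 • x) : exp ((Real.pi / ω) • T) x = -x := by
  have hrot (t : ℝ) : HasDerivAt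
      (fun s : ℝ ↦ Real.cos (s * ω) • x + (Real.sin (s * ω) / ω) • T x)
      (T (Real.cos (t * ω) • x + (Real.sin (t * ω) / ω) • T x)) t := by
    have hmul : HasDerivAt (fun s ↦ s * ω) ω t := hasDerivAt_mul_const ω
    refine ((hmul.cos.smul_const x).add
      ((hmul.sin.div_const ω).smul_const (T x))).congr_deriv ?_
    simp only [map_add, map_smul, hT, smul_smul]
    rw [add_comm]
    congr 2 <;> field_simp
  simpa [hω] using (eq_exp_smul_apply_of_hasDerivAt hrot (Real.pi / ω)).symm

lemma exp_surjective (T : V →L[ℝ] V) : Function.Surjective ⇑(exp T) := by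
  let : NormedAlgebra ℚ (V →L[ℝ] V) := .restrictScalars ℚ ℝ _
  exact (ContinuousLinearMap.isUnit_iff_bijective.1 (isUnit_exp T)).2

lemma continuous_exp_clm : Continuous (exp : (V →L[ℝ] V) → V →L[ℝ] V) :=
  continuous_iff_continuousAt.2 fun T ↦ (exp_analytic (𝕂 := ℝ) T).continuousAt

lemma map_exp_nhds_zero : map (exp : (V →L[ℝ] V) → V →L[ℝ] V) (𝓝 0) = 𝓝 1 := by
  have h : HasStrictFDerivAt exp
      (ContinuousLinearEquiv.refl ℝ (V →L[ℝ] V) : (V →L[ℝ] V) →L[ℝ] V →L[ℝ] V) 0 :=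
    hasStrictFDerivAt_exp_zero
  simpa using h.map_nhds_eq_of_equiv

lemma eventually_apply_eq_zero_of_exp_apply_eq :
    ∀ᶠ T : V →L[ℝ] V in 𝓝 0, ∀ x, exp T x = x → T x = 0 := by
  have hexp : ∀ᶠ T : V →L[ℝ] V in 𝓝 0, ‖exp T - 1‖ < 1 / 2 :=
    (continuous_exp_clm.sub continuous_const).norm.tendsto' 0 0 (by simp) |>.eventually_lt_const
      (by norm_num)
  obtain ⟨ε, hε, hball⟩ := Metric.eventually_nhds_iff_ball.1 hexp
  filter_upwards [Metric.ball_mem_nhds 0 hε] with T hT x hx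
  have hderiv (t : ℝ) : HasDerivAt (fun s : ℝ ↦ exp (s • T) x - s • T x)
      ((exp (t • T) - 1) (T x)) t := by
    refine ((hasDerivAt_exp_smul_apply T x t).sub
      ((hasDerivAt_id t).smul_const (T x))).congr_deriv ?_
    simp [exp_apply_comm ((Commute.refl T).smul_left t) x]
  have hbound (t : ℝ) (ht : t ∈ Set.Ico (0 : ℝ) 1) :
      ‖(exp (t • T) - 1) (T x)‖ ≤ 1 / 2 * ‖T x‖ := by
    refine (exp (t • T) - 1).le_of_opNorm_le (hball _ ?_).le _
    exact (convex_ball 0 ε).starConvex (Metric.mem_ball_self hε) |>.smul_mem hT ht.1 ht.2.le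
  have hTx := norm_image_sub_le_of_norm_deriv_le_segment_01'
    (fun t _ ↦ (hderiv t).hasDerivWithinAt) hbound
  have hTx' : ‖T x‖ ≤ 1 / 2 * ‖T x‖ := by simpa [hx] using hTx
  exact norm_le_zero_iff.1 (by linarith)

end Exponential

section Leibniz

variable {V : Type*} [NormedAddCommGroup V] [NormedSpace ℝ V]

/-- The natural action of an operator `D` on bilinear products `b`; the product
`leibnizDefect D b` vanishes exactly when `D` is a derivation of `b`. -/
noncomputable def leibnizDefect (D : V →L[ℝ] V) :
    (V →L[ℝ] V →L[ℝ] V) →L[ℝ] (V →L[ℝ] V →L[ℝ] V) :=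
  .compL ℝ V (V →L[ℝ] V) (V →L[ℝ] V) (.compL ℝ V V V D) -
    (ContinuousLinearMap.compL ℝ V V (V →L[ℝ] V)).flip D -
    .compL ℝ V (V →L[ℝ] V) (V →L[ℝ] V) ((ContinuousLinearMap.compL ℝ V V V).flip D)

@[simp]
lemma leibnizDefect_apply (D : V →L[ℝ] V) (b : V →L[ℝ] V →L[ℝ] V) (x y : V) :
    leibnizDefect D b x y = D (b x y) - b (D x) y - b x (D y) :=
  rfl

lemma continuous_leibnizDefect : Continuous (leibnizDefect (V := V)) := by
  unfold leibnizDefect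
  fun_prop

variable [CompleteSpace V]

lemma exp_leibnizDefect_apply (D : V →L[ℝ] V) (b : V →L[ℝ] V →L[ℝ] V) (x y : V) :
    exp (leibnizDefect D) b (exp D x) (exp D y) = exp D (b x y) := by
  have hderiv (t : ℝ) := ((hasDerivAt_exp_smul_apply (leibnizDefect D) b t).clm_apply
    (hasDerivAt_exp_smul_apply D x t)).clm_apply (hasDerivAt_exp_smul_apply D y t)
  simpa using eq_exp_smul_apply_of_hasDerivAt (T := D)
    (fun t ↦ (hderiv t).congr_deriv (by
      simp only [add_apply, leibnizDefect_apply]; abel)) 1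

lemma exp_map_of_leibnizDefect_eq_zero {D : V →L[ℝ] V} {b : V →L[ℝ] V →L[ℝ] V}
    (hD : leibnizDefect D b = 0) (x y : V) : exp D (b x y) = b (exp D x) (exp D y) := by
  rw [← exp_leibnizDefect_apply, exp_apply_eq_self hD]

lemma eventually_leibnizDefect_eq_zero_of_exp_map :
    ∀ᶠ D : V →L[ℝ] V in 𝓝 0, ∀ b : V →L[ℝ] V →L[ℝ] V,
      (∀ x y, exp D (b x y) = b (exp D x) (exp D y)) → leibnizDefect D b = 0 := by
  have h := (continuous_leibnizDefect (V := V)).tendsto' 0 0 (by ext; simp)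
  filter_upwards [h.eventually eventually_apply_eq_zero_of_exp_apply_eq] with D hD b hb
  refine hD b ?_
  ext x y
  obtain ⟨x, rfl⟩ := exp_surjective D x
  obtain ⟨y, rfl⟩ := exp_surjective D y
  rw [exp_leibnizDefect_apply, hb]

lemma eventually_exists_exp_eq_of_map (b : V →L[ℝ] V →L[ℝ] V) :
    ∀ᶠ φ : V →L[ℝ] V in 𝓝 1, (∀ x y, φ (b x y) = b (φ x) (φ y)) →
      ∃ D, leibnizDefect D b = 0 ∧ exp D = φ := by
  rw [← map_exp_nhds_zero, eventually_map]
  filter_upwards [eventually_leibnizDefect_eq_zero_of_exp_map] with D hD hb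
  exact ⟨D, hD b hb, rfl⟩

end Leibniz

section Kernel

variable {V : Type*} [NormedAddCommGroup V] [NormedSpace ℝ V] [FiniteDimensional ℝ V]

lemma eventually_ker_add_le_ker {S : V →L[ℝ] V} (hS : Disjoint S.ker S.range) :
    ∀ᶠ U in 𝓝 0, Commute S U → (S + U).ker ≤ S.ker := by
  obtain ⟨K, hK, hanti⟩ := ((S : V →ₗ[ℝ] V).domRestrict S.range).exists_antilipschitzWith
    (by rwa [LinearMap.ker_domRestrict, ← Submodule.disjoint_iff_comap_eq_bot, disjoint_comm])
  filter_upwards [Metric.ball_mem_nhds 0 (inv_pos.2 hK)] with U hU hcomm v hv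
  have hSS : ‖S v‖ ≤ K * ‖S (S v)‖ := by
    simpa using hanti.le_mul_dist ⟨S v, v, rfl⟩ 0
  have hSv : S v = -U v := eq_neg_of_add_eq_zero_left hv
  have hUS : S (S v) = -U (S v) := by
    have hSU : S (U v) = U (S v) := DFunLike.congr_fun hcomm.eq v
    rw [← hSU, ← map_neg, ← hSv]
  by_contra hne
  have hlt : ‖S (S v)‖ < (K : ℝ)⁻¹ * ‖S v‖ := by
    rw [hUS, norm_neg]
    exact (U.le_opNorm _).trans_lt
      (mul_lt_mul_of_pos_right (mem_ball_zero_iff.1 hU) (norm_pos_iff.2 hne))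
  exact hSS.not_gt ((lt_inv_mul_iff₀ (NNReal.coe_pos.2 hK)).1 hlt)

lemma exists_ker_mul_exp_smul_sub_one_le {φ T : V →L[ℝ] V} (hφ : Disjoint (φ - 1).ker (φ - 1).range)
    (hφT : Commute φ T) : ∃ s : ℝ, (φ * exp (s • T) - 1).ker ≤ (φ - 1).ker ⊓ T.ker := by
  have := FiniteDimensional.complete ℝ V
  have hsmul : Tendsto (fun s : ℝ ↦ s • T) (𝓝[≠] 0) (𝓝 0) :=
    ((continuous_id.smul continuous_const).tendsto' 0 0 (by simp)).mono_left nhdsWithin_le_nhds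
  have hexp : Tendsto (fun s : ℝ ↦ φ * (exp (s • T) - 1)) (𝓝[≠] 0) (𝓝 0) := by
    have hcont : Continuous fun S : V →L[ℝ] V ↦ φ * (exp S - 1) :=
      continuous_const.mul (continuous_exp_clm.sub continuous_const)
    exact (hcont.tendsto' 0 0 (by simp)).comp hsmul
  obtain ⟨s, ⟨hker, hlog⟩, hs : s ≠ 0⟩ := ((hexp.eventually
    (eventually_ker_add_le_ker hφ)).and (hsmul.eventually
      eventually_apply_eq_zero_of_exp_apply_eq)).and self_mem_nhdsWithin |>.exists
  refine ⟨s, fun z hz ↦ ?_⟩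
  have hcomm : Commute φ (exp (s • T)) := (hφT.smul_right s).exp_right
  have hz' : φ (exp (s • T) z) = z := by simpa [sub_eq_zero] using hz
  have hφz : z ∈ (φ - 1).ker := by
    have hcomm' : Commute (φ - 1) (φ * (exp (s • T) - 1)) :=
      ((Commute.refl φ).mul_right (hcomm.sub_right (.one_right φ))).sub_left (.one_left _)
    exact hker hcomm' (by simp [hz'])
  have hexpz : exp (s • T) z = z := calc
    exp (s • T) z = exp (s • T) (φ z) := by rw [show φ z = z by simpa [sub_eq_zero] using hφz]
    _ = φ (exp (s • T) z) := congr($hcomm.eq.symm z)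
    _ = z := hz'
  exact ⟨hφz, by simpa [hs] using hlog z hexpz⟩

lemma analyticAt_det {E : Type*} [NormedAddCommGroup E] [NormedSpace ℝ E] {F : E → V →L[ℝ] V}
    {t : E} (hF : AnalyticAt ℝ F t) :
    AnalyticAt ℝ (fun s ↦ (F s).det) t := by
  let b := Module.finBasis ℝ V
  have hentry (i j) : AnalyticAt ℝ (fun s ↦ b.repr (F s (b j)) i) t :=
    ((b.coord i).toContinuousLinearMap.analyticAt _).comp
      (((ContinuousLinearMap.apply ℝ V (b j)).analyticAt _).comp hF)
  simp only [ContinuousLinearMap.det, ← LinearMap.det_toMatrix b, Matrix.det_apply,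
    LinearMap.toMatrix_apply]
  exact Finset.analyticAt_fun_sum _ fun σ _ ↦
    (Finset.analyticAt_fun_prod _ fun i _ ↦ hentry (σ i) i).const_smul

lemma finrank_ker_le_of_analyticAt {W : Type*} [NormedAddCommGroup W] [NormedSpace ℝ W]
    [FiniteDimensional ℝ W] {F : ℝ → V →L[ℝ] W} (hF : ∀ t, AnalyticAt ℝ F t) {r : ℕ} {t₀ : ℝ}
    (hr : ∀ᶠ t in 𝓝 t₀, r ≤ finrank ℝ (F t).ker) (t₁ : ℝ) : r ≤ finrank ℝ (F t₁).ker := by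
  -- On a complement `V₁` of `(F t₁).ker`, the determinant of `g ∘ F t` is analytic in `t` and
  -- nonzero at `t₁`, hence nonzero at points `t` arbitrarily close to `t₀`.
  obtain ⟨V₁, hV₁⟩ := (F t₁).ker.exists_isCompl
  obtain ⟨g, hg⟩ := ((F t₁ : V →ₗ[ℝ] W).domRestrict V₁).exists_leftInverse_of_injective
    (by simpa [LinearMap.ker_domRestrict, ← Submodule.disjoint_iff_comap_eq_bot]
      using hV₁.disjoint.symm)
  let G (t : ℝ) : V₁ →L[ℝ] V₁ := g.toContinuousLinearMap ∘L F t ∘L V₁.subtypeL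
  have hdet : AnalyticOnNhd ℝ (fun t ↦ (G t).det) Set.univ := fun t _ ↦
    analyticAt_det <| ((ContinuousLinearMap.compL ℝ V₁ W V₁ g.toContinuousLinearMap ∘L
      (ContinuousLinearMap.compL ℝ V₁ V W).flip V₁.subtypeL).analyticAt _).comp (hF t)
  have hdet₁ : (G t₁).det = 1 := by
    rw [ContinuousLinearMap.det, show (G t₁ : V₁ →ₗ[ℝ] V₁) = .id from hg, LinearMap.det_id]
  have hdet₀ : ∃ᶠ t in 𝓝 t₀, (G t).det ≠ 0 := fun h ↦ by
    have hzero := hdet.eq_of_eventuallyEq (g := 0) analyticOnNhd_const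
      (h.mono fun t ↦ not_not.1)
    simpa [hdet₁] using congrFun hzero t₁
  obtain ⟨t, ht, hrt⟩ := (hdet₀.and_eventually hr).exists
  have hdisj : Disjoint (F t).ker V₁ := by
    refine Submodule.disjoint_def.2 fun v hv hv₁ ↦ ?_
    have hGv : G t ⟨v, hv₁⟩ = 0 := by simp [G, show F t v = 0 from hv]
    simpa using (LinearMap.ker_eq_bot'.1 (LinearMap.isUnit_iff_ker_eq_bot _ |>.1
      ((LinearMap.isUnit_iff_isUnit_det _).2 (isUnit_iff_ne_zero.2 ht))) _ hGv)
  have := Submodule.finrank_add_finrank_le_of_disjoint hdisj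
  have := Submodule.finrank_add_eq_of_isCompl hV₁
  lia

end Kernel

section Reflection

variable {E : Type*} [NormedAddCommGroup E] [InnerProductSpace ℝ E]

lemma reflection_orthogonal_singleton_apply (h u : E) :
    (ℝ ∙ h)ᗮ.reflection u = u - (2 * (⟪h, u⟫_ℝ / ‖h‖ ^ 2)) • h := by
  rw [Submodule.reflection_orthogonal_apply, Submodule.reflection_singleton_apply]
  module

lemma apply_eq_self_of_reflection_apply_eq_self (w : E ≃ₗᵢ[ℝ] E) {h u v : E} (hv : w v = v)
    (hhv : ⟪h, v⟫_ℝ ≠ 0) (hu : (ℝ ∙ h)ᗮ.reflection (w u) = u) : ⟪h, u⟫_ℝ = 0 ∧ w u = u := by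
  have hwu : w u = (ℝ ∙ h)ᗮ.reflection u := by
    rw [← Submodule.reflection_reflection (ℝ ∙ h)ᗮ (w u), hu]
  have hinner : ⟪(ℝ ∙ h)ᗮ.reflection u, v⟫_ℝ = ⟪u, v⟫_ℝ := by
    rw [← hwu, ← w.inner_map_map u v, hv]
  have hhu : ⟪h, u⟫_ℝ = 0 := by
    have hh : h ≠ 0 := fun h0 ↦ hhv (by simp [h0])
    simpa [reflection_orthogonal_singleton_apply, inner_sub_left, inner_smul_left, hhv, hh]
      using hinner
  exact ⟨hhu, by simp [hwu, reflection_orthogonal_singleton_apply, hhu]⟩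

lemma exists_mem_forall_apply_eq_self_imp_eq_zero [FiniteDimensional ℝ E]
    {Γ : Submonoid (E ≃ₗᵢ[ℝ] E)}
    (hΓ : ∀ v ≠ 0, ∃ h : E, ⟪h, v⟫_ℝ ≠ 0 ∧ (ℝ ∙ h)ᗮ.reflection ∈ Γ) :
    ∃ w ∈ Γ, ∀ v, w v = v → v = 0 := by
  -- If the fixed space of `w` is minimal and contains `v ≠ 0`, composing `w` with a reflection that
  -- moves `v` shrinks it.
  let fixed (w : E ≃ₗᵢ[ℝ] E) : Submodule ℝ E := LinearMap.eqLocus w.toLinearEquiv.toLinearMap .id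
  obtain ⟨w, hw, hmin⟩ := exists_minimalFor_of_wellFoundedLT (· ∈ Γ) fixed ⟨1, Γ.one_mem⟩
  refine ⟨w, hw, fun v hv ↦ by_contra fun hv0 ↦ ?_⟩
  obtain ⟨h, hhv, hrefl⟩ := hΓ v hv0
  have hle : fixed ((ℝ ∙ h)ᗮ.reflection * w) ≤ fixed w := fun u hu ↦
    (apply_eq_self_of_reflection_apply_eq_self w hv hhv hu).2
  have hv' : (ℝ ∙ h)ᗮ.reflection (w v) = v := hmin (Γ.mul_mem hrefl hw) hle hv
  exact hhv (apply_eq_self_of_reflection_apply_eq_self w hv hhv hv').1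

end Reflection

section StarNormal

lemma isStarNormal_sub_one {R : Type*} [Ring R] [StarRing R] {u : R} (hu : u ∈ unitary R) :
    IsStarNormal (u - 1) := by
  have : IsStarNormal u := Unitary.coe_isStarNormal ⟨u, hu⟩
  rw [← neg_sub]
  infer_instance

variable {E : Type*} [NormedAddCommGroup E] [InnerProductSpace ℝ E]

lemma disjoint_ker_range_of_isStarNormal [CompleteSpace E] {T : E →L[ℝ] E} (hT : IsStarNormal T) :
    Disjoint T.ker T.range := by
  rw [← ContinuousLinearMap.IsStarNormal.orthogonal_range hT]
  exact T.range.orthogonal_disjoint.symm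

lemma ker_le_orthogonal_of_isStarNormal [FiniteDimensional ℝ E] {T : E →L[ℝ] E}
    (hT : IsStarNormal T) {C : Submodule ℝ E} (hC : ∀ c ∈ C, T c ∈ C)
    (hinj : ∀ c ∈ C, T c = 0 → c = 0) : T.ker ≤ Cᗮ := by
  have := FiniteDimensional.complete ℝ E
  have hR : Function.Injective (T.toLinearMap.restrict hC) :=
    (injective_iff_map_eq_zero _).2 fun c hc ↦
      Subtype.ext (hinj c c.2 (congrArg Subtype.val hc))
  have hle : C ≤ T.range := fun c hc ↦ by
    obtain ⟨d, hd⟩ := LinearMap.injective_iff_surjective.1 hR ⟨c, hc⟩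
    exact ⟨d, congrArg Subtype.val hd⟩
  rw [← ContinuousLinearMap.IsStarNormal.orthogonal_range hT]
  exact Submodule.orthogonal_le hle

end StarNormal

/-- A real Lie algebra with an invariant inner product. In finite dimension these are the Lie
algebras of compact Lie groups. -/
class CompactLieAlgebra (L : Type*) extends NormedAddCommGroup L, LieRing L,
    InnerProductSpace ℝ L, LieAlgebra ℝ L where
  inner_lie_left (x y z : L) : ⟪⁅x, y⁆, z⟫_ℝ = -⟪y, ⁅x, z⁆⟫_ℝ

section AbelianSubspace

variable {K L : Type*} [Field K] [LieRing L] [LieAlgebra K L]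

/-- A subspace of a Lie algebra on which the bracket vanishes. -/
def IsAbelianSubspace (A : Submodule K L) : Prop :=
  ∀ x ∈ A, ∀ y ∈ A, ⁅x, y⁆ = 0

/-- A maximal element among the abelian subspaces contained in the subspace `M`. The maximality is
expressed by self-centralization; the case `M = ⊤` is that of the Cartan subalgebras of a compact
Lie algebra. -/
structure IsMaximalAbelianIn (M A : Submodule K L) : Prop where
  le : A ≤ M
  isAbelian : IsAbelianSubspace A
  mem_of_forall_lie_eq_zero : ∀ z ∈ M, (∀ a ∈ A, ⁅a, z⁆ = 0) → z ∈ A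

lemma IsAbelianSubspace.sup_span_singleton {A : Submodule K L} (hA : IsAbelianSubspace A) {z : L}
    (hz : ∀ a ∈ A, ⁅a, z⁆ = 0) : IsAbelianSubspace (A ⊔ K ∙ z) := by
  intro x hx y hy
  obtain ⟨a, ha, _, hr, rfl⟩ := Submodule.mem_sup.1 hx
  obtain ⟨b, hb, _, hs, rfl⟩ := Submodule.mem_sup.1 hy
  obtain ⟨r, rfl⟩ := Submodule.mem_span_singleton.1 hr
  obtain ⟨s, rfl⟩ := Submodule.mem_span_singleton.1 hs
  simp [hA a ha b hb, hz a ha, ← lie_skew z b, hz b hb]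

lemma isAbelianSubspace_bot : IsAbelianSubspace (⊥ : Submodule K L) := by
  simp [IsAbelianSubspace]

lemma isAbelianSubspace_span_singleton (x : L) : IsAbelianSubspace (K ∙ x) := by
  simpa using isAbelianSubspace_bot.sup_span_singleton (z := x) (by simp)

lemma IsAbelianSubspace.exists_isMaximalAbelianIn [FiniteDimensional K L] {A M : Submodule K L}
    (hA : IsAbelianSubspace A) (hAM : A ≤ M) : ∃ B, A ≤ B ∧ IsMaximalAbelianIn M B := by
  obtain ⟨B, hAB, ⟨hB, hBM⟩, hmax⟩ := exists_maximal_ge_of_wellFoundedGT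
    (fun B ↦ IsAbelianSubspace B ∧ B ≤ M) A ⟨hA, hAM⟩
  refine ⟨B, hAB, hBM, hB, fun z hzM hz ↦ ?_⟩
  have hle : B ⊔ K ∙ z ≤ B := hmax ⟨hB.sup_span_singleton hz, sup_le hBM (by simpa)⟩ le_sup_left
  exact hle (Submodule.mem_sup_right (Submodule.mem_span_singleton_self z))

lemma isMaximalAbelianIn_top_of_isCartanSubalgebra [FiniteDimensional K L]
    [LieAlgebra.IsKilling K L] (C : LieSubalgebra K L) [hC : C.IsCartanSubalgebra] :
    IsMaximalAbelianIn ⊤ C.toSubmodule where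
  le := le_top
  isAbelian x hx y hy := congrArg Subtype.val (trivial_lie_zero C C ⟨x, hx⟩ ⟨y, hy⟩)
  mem_of_forall_lie_eq_zero z _ hz := by
    rw [LieSubalgebra.mem_toSubmodule, ← hC.self_normalizing, LieSubalgebra.mem_normalizer_iff']
    exact fun c hc ↦ by rw [hz c hc]; exact C.zero_mem

end AbelianSubspace

namespace CompactLieAlgebra

section Automorphisms

variable {L : Type*} [CompactLieAlgebra L] [FiniteDimensional ℝ L]

instance : CompleteSpace L :=
  FiniteDimensional.complete ℝ L

/-- The adjoint representation as a continuous bilinear map. -/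
noncomputable def adL : L →L[ℝ] L →L[ℝ] L :=
  (LinearMap.toContinuousLinearMap.toLinearMap ∘ₗ
    (LieModule.toEnd ℝ L L : L →ₗ[ℝ] End ℝ L)).toContinuousLinearMap

@[simp]
lemma adL_apply (x y : L) : adL x y = ⁅x, y⁆ :=
  rfl

lemma leibnizDefect_adL (x : L) : leibnizDefect (adL x) adL = 0 := by
  ext y z
  simp

lemma commute_adL {x y : L} (h : ⁅x, y⁆ = 0) : Commute (adL x) (adL y) := by
  ext z
  simp [leibniz_lie x y z, h]

lemma exists_adL_eq_of_leibnizDefect_eq_zero [LieAlgebra.IsKilling ℝ L] {D : L →L[ℝ] L}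
    (hD : leibnizDefect D adL = 0) : ∃ z, adL z = D := by
  have hleibniz (x y : L) : D ⁅x, y⁆ = ⁅x, D y⁆ - ⁅y, D x⁆ := by
    have hxy : D ⁅x, y⁆ - ⁅D x, y⁆ - ⁅x, D y⁆ = 0 := by simpa using congr($hD x y)
    rw [← lie_skew (D x) y] at hxy
    linear_combination (norm := abel) hxy
  obtain ⟨z, hz⟩ := LieDerivation.IsKilling.exists_eq_ad ⟨D.toLinearMap, hleibniz⟩
  exact ⟨z, by ext y; simpa using congr($hz y)⟩

lemma adL_mem_skewAdjoint (x : L) : adL x ∈ skewAdjoint (L →L[ℝ] L) := by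
  rw [skewAdjoint.mem_iff, ContinuousLinearMap.star_eq_adjoint, eq_comm,
    ContinuousLinearMap.eq_adjoint_iff]
  intro y z
  simp [-lie_skew, inner_lie_left]

lemma disjoint_ker_range_adL (x : L) : Disjoint (adL x).ker (adL x).range :=
  disjoint_ker_range_of_isStarNormal (skewAdjoint.isStarNormal_of_mem (adL_mem_skewAdjoint x))

lemma exp_adL_mem_unitary (x : L) : exp (adL x) ∈ unitary (L →L[ℝ] L) := by
  let : NormedAlgebra ℚ (L →L[ℝ] L) := .restrictScalars ℚ ℝ _
  exact exp_mem_unitary_of_mem_skewAdjoint (adL_mem_skewAdjoint x)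

lemma exists_generic_of_isAbelianSubspace {A : Submodule ℝ L} (hA : IsAbelianSubspace A) :
    ∃ m ∈ A, ∀ z : L, ⁅m, z⁆ = 0 → ∀ a ∈ A, ⁅a, z⁆ = 0 := by
  obtain ⟨m, hm, hmin⟩ := exists_minimalFor_of_wellFoundedLT (· ∈ A)
    (fun x : L ↦ (adL x).ker) ⟨0, A.zero_mem⟩
  refine ⟨m, hm, fun z hz a ha ↦ ?_⟩
  have hsmall : Tendsto (fun s : ℝ ↦ s • adL a) (𝓝[≠] 0) (𝓝 0) :=
    ((continuous_id.smul continuous_const).tendsto' 0 0 (by simp)).mono_left nhdsWithin_le_nhds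
  obtain ⟨s, hle, hs : s ≠ 0⟩ := ((hsmall.eventually (eventually_ker_add_le_ker
    (disjoint_ker_range_adL m))).and self_mem_nhdsWithin).exists
  have hker : (adL (m + s • a)).ker ≤ (adL m).ker := by
    simpa using hle ((commute_adL (hA m hm a ha)).smul_right s)
  have hz' : ⁅m + s • a, z⁆ = 0 := hmin (A.add_mem hm (A.smul_mem s ha)) hker hz
  simpa [hz, hs] using hz'

variable (L) in
/-- The monoid generated by the operators `exp (ad x)`. It is the group of inner automorphisms,
but closure under inverses is never needed. -/
noncomputable def innerAut : Submonoid (L →L[ℝ] L) :=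
  .closure (Set.range fun x : L ↦ exp (adL x))

variable (L) in
/-- The monoid of automorphisms preserving the inner product, a compact set of operators that
contains `innerAut L`. -/
def isometricAut : Submonoid (L →L[ℝ] L) where
  carrier := {φ | φ ∈ unitary (L →L[ℝ] L) ∧ ∀ x y, φ ⁅x, y⁆ = ⁅φ x, φ y⁆}
  one_mem' := ⟨one_mem _, fun _ _ ↦ rfl⟩
  mul_mem' hφ hψ := ⟨mul_mem hφ.1 hψ.1, fun x y ↦ by simp [hφ.2, hψ.2]⟩

lemma exp_adL_mem_isometricAut (x : L) : exp (adL x) ∈ isometricAut L :=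
  ⟨exp_adL_mem_unitary x, exp_map_of_leibnizDefect_eq_zero (leibnizDefect_adL x)⟩

lemma innerAut_le_isometricAut : innerAut L ≤ isometricAut L :=
  Submonoid.closure_le.2 (Set.range_subset_iff.2 exp_adL_mem_isometricAut)

lemma isCompact_isometricAut : IsCompact (isometricAut L : Set (L →L[ℝ] L)) := by
  have := FiniteDimensional.proper ℝ (L →L[ℝ] L)
  refine (isCompact_closedBall (0 : L →L[ℝ] L) 1).of_isClosed_subset ?_ fun φ hφ ↦ ?_
  · have hclosed : IsClosed {φ : L →L[ℝ] L | ∀ x y, φ ⁅x, y⁆ = ⁅φ x, φ y⁆} := by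
      simp only [Set.ofPred_forall, ← adL_apply]
      exact isClosed_iInter fun x ↦ isClosed_iInter fun y ↦
        isClosed_eq (by fun_prop) (by fun_prop)
    exact isClosed_unitary.inter hclosed
  · refine mem_closedBall_zero_iff.2 (φ.opNorm_le_bound zero_le_one fun x ↦ ?_)
    rw [ContinuousLinearMap.norm_map_of_mem_unitary hφ.1, one_mul]

lemma exists_mem_isometricAut_lie_apply_eq_zero (x y : L) :
    ∃ φ ∈ isometricAut L, ⁅φ x, y⁆ = 0 := by
  obtain ⟨φ, hφ, hmax⟩ := isCompact_isometricAut.exists_isMaxOn ⟨1, (isometricAut L).one_mem⟩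
    (f := fun φ : L →L[ℝ] L ↦ ⟪φ x, y⟫_ℝ) (by fun_prop)
  -- Hunt's argument: differentiate along `exp (t ad m) φ` at the maximum `t = 0`.
  refine ⟨φ, hφ, inner_self_eq_zero (𝕜 := ℝ).1 ?_⟩
  let m := ⁅φ x, y⁆
  have hcrit : IsLocalMax (fun t : ℝ ↦ ⟪exp (t • adL m) (φ x), y⟫_ℝ) 0 :=
    .of_forall fun t ↦ by
      have hmem : exp (adL (t • m)) * φ ∈ isometricAut L :=
        mul_mem (exp_adL_mem_isometricAut (t • m)) hφ
      simpa using hmax hmem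
  have hderiv := (hasDerivAt_exp_smul_apply (adL m) (φ x) 0).inner ℝ (hasDerivAt_const 0 y)
  have hzero : ⟪⁅m, φ x⁆, y⟫_ℝ = 0 := by simpa using hcrit.hasDerivAt_eq_zero hderiv
  rwa [← lie_skew, inner_neg_left, inner_lie_left, neg_neg] at hzero

lemma finrank_le_of_isMaximalAbelianIn_top {A B : Submodule ℝ L}
    (hA : IsMaximalAbelianIn ⊤ A) (hB : IsMaximalAbelianIn ⊤ B) :
    finrank ℝ B ≤ finrank ℝ A := by
  obtain ⟨x, -, hxA⟩ := exists_generic_of_isAbelianSubspace hA.isAbelian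
  obtain ⟨y, -, hyB⟩ := exists_generic_of_isAbelianSubspace hB.isAbelian
  obtain ⟨φ, ⟨hφ, hlie⟩, hφxy⟩ := exists_mem_isometricAut_lie_apply_eq_zero x y
  have hφx : φ x ∈ B := hB.mem_of_forall_lie_eq_zero _ trivial
    (hyB _ (by rw [← lie_skew, hφxy, neg_zero]))
  have hle : B ≤ A.map φ.toLinearMap := fun b hb ↦ by
    obtain ⟨z, rfl⟩ : ∃ z, φ z = b := (Unitary.linearIsometryEquiv ⟨φ, hφ⟩).surjective b
    have hxz : ⁅x, z⁆ = 0 := by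
      rw [← norm_eq_zero, ← ContinuousLinearMap.norm_map_of_mem_unitary hφ, hlie,
        hB.isAbelian _ hφx _ hb, norm_zero]
    exact ⟨z, hA.mem_of_forall_lie_eq_zero z trivial (hxA z hxz), rfl⟩
  exact (Submodule.finrank_mono hle).trans (Submodule.finrank_map_le _ _)

lemma finrank_le_finrank_ker_adL {A : Submodule ℝ L} (hA : IsMaximalAbelianIn ⊤ A) (x : L) :
    finrank ℝ A ≤ finrank ℝ (adL x).ker := by
  obtain ⟨B, hxB, hB⟩ :=
    (isAbelianSubspace_span_singleton (K := ℝ) x).exists_isMaximalAbelianIn le_top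
  refine (finrank_le_of_isMaximalAbelianIn_top hB hA).trans (Submodule.finrank_mono fun b hb ↦ ?_)
  exact hB.isAbelian x (hxB (Submodule.mem_span_singleton_self x)) b hb

lemma exists_analytic_path_of_mem_innerAut {φ : L →L[ℝ] L} (hφ : φ ∈ innerAut L) :
    ∃ F : ℝ → L →L[ℝ] L, (∀ t, AnalyticAt ℝ F t) ∧ F 0 = 1 ∧ F 1 = φ ∧
      ∀ t, F t ∈ innerAut L := by
  induction hφ using Submonoid.closure_induction with
  | mem φ hφ =>
    obtain ⟨x, rfl⟩ := hφ
    refine ⟨fun t ↦ exp (t • adL x), fun t ↦ ?_, by simp, by simp, fun t ↦ ?_⟩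
    · exact (exp_analytic (𝕂 := ℝ) _).comp (analyticAt_id.smul analyticAt_const)
    · exact Submonoid.subset_closure ⟨t • x, by simp⟩
  | one => exact ⟨fun _ ↦ 1, fun _ ↦ analyticAt_const, rfl, rfl, fun _ ↦ one_mem _⟩
  | mul φ ψ _ _ hφ hψ =>
    obtain ⟨F, hF, hF0, rfl, hFmem⟩ := hφ
    obtain ⟨G, hG, hG0, rfl, hGmem⟩ := hψ
    exact ⟨F * G, fun t ↦ (hF t).mul (hG t), by simp [hF0, hG0], rfl,
      fun t ↦ mul_mem (hFmem t) (hGmem t)⟩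

lemma eventually_exists_exp_adL_eq [LieAlgebra.IsKilling ℝ L] :
    ∀ᶠ φ : L →L[ℝ] L in 𝓝 1, φ ∈ isometricAut L → ∃ x, exp (adL x) = φ := by
  filter_upwards [eventually_exists_exp_eq_of_map adL] with φ hexp hφ
  obtain ⟨D, hD, rfl⟩ := hexp hφ.2
  obtain ⟨x, rfl⟩ := exists_adL_eq_of_leibnizDefect_eq_zero hD
  exact ⟨x, rfl⟩

lemma finrank_le_finrank_ker_sub_one [LieAlgebra.IsKilling ℝ L] {A : Submodule ℝ L}
    (hA : IsMaximalAbelianIn ⊤ A) {φ : L →L[ℝ] L} (hφ : φ ∈ innerAut L) :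
    finrank ℝ A ≤ finrank ℝ (φ - 1).ker := by
  obtain ⟨F, hF, hF0, rfl, hFmem⟩ := exists_analytic_path_of_mem_innerAut hφ
  have hlim : Tendsto F (𝓝 0) (𝓝 1) := by simpa [hF0] using (hF 0).continuousAt.tendsto
  refine finrank_ker_le_of_analyticAt (F := fun t ↦ F t - 1) (t₀ := 0)
    (fun t ↦ (hF t).sub analyticAt_const) ?_ 1
  filter_upwards [hlim.eventually eventually_exists_exp_adL_eq] with t ht
  obtain ⟨x, hx⟩ := ht (innerAut_le_isometricAut (hFmem t))
  refine (finrank_le_finrank_ker_adL hA x).trans (Submodule.finrank_mono fun y hy ↦ ?_)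
  have hy' : exp (adL x) y = y := exp_apply_eq_self hy
  simp [← hx, hy']

lemma exists_ker_mul_exp_adL_sub_one_le {φ : L →L[ℝ] L} (hφ : φ ∈ isometricAut L)
    {A : Submodule ℝ L} (hA : IsMaximalAbelianIn (φ - 1).ker A) :
    ∃ x, (φ * exp (adL x) - 1).ker ≤ A := by
  obtain ⟨m, hm, hmA⟩ := exists_generic_of_isAbelianSubspace hA.isAbelian
  have hφm : φ m = m := by simpa [sub_eq_zero] using hA.le hm
  have hcomm : Commute φ (adL m) := by
    ext z
    simp [hφ.2, hφm]
  obtain ⟨s, hs⟩ := exists_ker_mul_exp_smul_sub_one_le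
    (disjoint_ker_range_of_isStarNormal (isStarNormal_sub_one hφ.1)) hcomm
  refine ⟨s • m, fun z hz ↦ ?_⟩
  obtain ⟨hφz, hmz⟩ := hs (by simpa using hz)
  exact hA.mem_of_forall_lie_eq_zero z hφz (hmA z hmz)

lemma isMaximalAbelianIn_top_of_ker_sub_one [LieAlgebra.IsKilling ℝ L] {φ : L →L[ℝ] L}
    (hφ : φ ∈ innerAut L) {A : Submodule ℝ L} (hA : IsMaximalAbelianIn (φ - 1).ker A) :
    IsMaximalAbelianIn ⊤ A := by
  obtain ⟨x, hx⟩ := exists_ker_mul_exp_adL_sub_one_le (innerAut_le_isometricAut hφ) hA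
  have hmem : φ * exp (adL x) ∈ innerAut L := mul_mem hφ (Submonoid.subset_closure ⟨x, rfl⟩)
  obtain ⟨B, hAB, hB⟩ := hA.isAbelian.exists_isMaximalAbelianIn le_top
  have hrank : finrank ℝ B ≤ finrank ℝ A :=
    (finrank_le_finrank_ker_sub_one hB hmem).trans (Submodule.finrank_mono hx)
  rwa [Submodule.eq_of_le_of_finrank_le hAB hrank]

lemma exists_isCartanSubalgebra_toSubmodule_eq {A : Submodule ℝ L}
    (hA : IsMaximalAbelianIn ⊤ A) :
    ∃ C : LieSubalgebra ℝ L, C.IsCartanSubalgebra ∧ C.toSubmodule = A := by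
  let C : LieSubalgebra ℝ L :=
    { A with lie_mem' := fun {x y} hx hy ↦ hA.isAbelian x hx y hy ▸ A.zero_mem }
  have habelian : IsLieAbelian C := ⟨fun x y ↦ Subtype.ext (hA.isAbelian x x.2 y y.2)⟩
  refine ⟨C, ⟨inferInstance, le_antisymm (fun z hz ↦ ?_) C.le_normalizer⟩, rfl⟩
  refine hA.mem_of_forall_lie_eq_zero z trivial fun a ha ↦ ?_
  have hsq : ⁅a, ⁅a, z⁆⁆ = 0 :=
    hA.isAbelian a ha _ ((C.mem_normalizer_iff' z).1 hz a ha)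
  exact Submodule.disjoint_def.1 (disjoint_ker_range_adL a) _ hsq ⟨z, rfl⟩

end Automorphisms

section RootTriple

variable {L : Type*} [CompactLieAlgebra L]

/-- A real root vector `e + i f` of the abelian subspace `C`, with its coroot direction
`h = ⁅e, f⁆`: the root is `c ↦ ⟪h, c⟫`, up to the factor `i`. -/
structure IsRootTriple (C : Submodule ℝ L) (h e f : L) : Prop where
  mem : h ∈ C
  lie_eq : ⁅e, f⁆ = h
  lie_left : ∀ c ∈ C, ⁅c, e⁆ = ⟪h, c⟫_ℝ • f
  lie_right : ∀ c ∈ C, ⁅c, f⁆ = -⟪h, c⟫_ℝ • e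

variable [FiniteDimensional ℝ L]

lemma IsRootTriple.exp_apply {C : Submodule ℝ L} {h e f : L} (H : IsRootTriple C h e f)
    (hh : h ≠ 0) {c : L} (hc : c ∈ C) :
    exp ((Real.pi / ‖h‖) • adL e) c = c - (2 * (⟪h, c⟫_ℝ / ‖h‖ ^ 2)) • h := by
  have hh' : ‖h‖ ≠ 0 := norm_ne_zero_iff.2 hh
  have hlie (d : L) (hd : d ∈ C) : ⁅e, d⁆ = -⟪h, d⟫_ℝ • f := by
    rw [← lie_skew, H.lie_left d hd, neg_smul]
  have hneg : exp ((Real.pi / ‖h‖) • adL e) h = -h :=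
    exp_pi_div_smul_apply_eq_neg hh' (by simp [hlie h H.mem, H.lie_eq])
  let r := ⟪h, c⟫_ℝ / ‖h‖ ^ 2
  have hperp : ⟪h, c - r • h⟫_ℝ = 0 := by
    simp [r, inner_sub_right, inner_smul_right, hh']
  have hfix : exp ((Real.pi / ‖h‖) • adL e) (c - r • h) = c - r • h :=
    exp_apply_eq_self (by simp [hlie _ (C.sub_mem hc (C.smul_mem r H.mem)), hperp])
  rw [map_sub, map_smul (exp _), hneg, sub_eq_iff_eq_add] at hfix
  rw [hfix]
  module

lemma exists_lie_lie_mem_span_singleton [LieAlgebra.IsKilling ℝ L] {C : Submodule ℝ L}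
    (hC : IsAbelianSubspace C) {v : L} (hv : v ∈ C) (hv0 : v ≠ 0) :
    ∃ e : L, ‖e‖ = 1 ∧ ⁅v, e⁆ ≠ 0 ∧ ∀ c ∈ C, ⁅c, ⁅v, e⁆⁆ ∈ ℝ ∙ e := by
  let T (c : C) : L →ₗ[ℝ] L := (adL (c : L) ∘L adL v).toLinearMap
  have hcomm (c d : L) (hc : c ∈ C) (hd : d ∈ C) (x : L) : ⁅c, ⁅d, x⁆⁆ = ⁅d, ⁅c, x⁆⁆ := by
    simp [leibniz_lie c d x, hC c hc d hd]
  have hsymm (c : C) : (T c).IsSymmetric := fun x y ↦ by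
    simp [T, inner_lie_left, hcomm v c hv c.2]
  have hpair : Pairwise (Function.onFun Commute T) := fun c d _ ↦ by
    ext x
    simp [T, hcomm v d hv d.2, hcomm c d c.2 d.2, hcomm v c hv c.2]
  have hker : (adL v).ker ≠ ⊤ := fun h ↦ hv0 <| by
    have hcenter : v ∈ LieAlgebra.center ℝ L := fun x ↦ by
      rw [← lie_skew, neg_eq_zero]
      exact LinearMap.congr_fun (LinearMap.ker_eq_top.1 h) x
    simpa using hcenter
  obtain ⟨χ, hχ⟩ : ∃ χ : C → ℝ, ¬ ⨅ c, End.eigenspace (T c) (χ c) ≤ (adL v).ker := by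
    by_contra! h
    exact hker (top_le_iff.1
      ((LinearMap.IsSymmetric.iSup_iInf_eq_top_of_commute hsymm hpair).ge.trans (iSup_le h)))
  obtain ⟨e, he, hve⟩ := SetLike.not_le_iff_exists.1 hχ
  have he0 : e ≠ 0 := fun h0 ↦ hve (by simp [h0])
  refine ⟨‖e‖⁻¹ • e, norm_smul_inv_norm he0, ?_, fun c hc ↦ ?_⟩
  · simpa [he0] using hve
  · have hmem := Submodule.smul_mem _ ‖e‖⁻¹ ((Submodule.mem_iInf _).1 he ⟨c, hc⟩)
    exact Submodule.mem_span_singleton.2 ⟨χ ⟨c, hc⟩, (End.mem_eigenspace_iff.1 hmem).symm⟩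

lemma exists_isRootTriple [LieAlgebra.IsKilling ℝ L] {C : Submodule ℝ L}
    (hC : IsMaximalAbelianIn ⊤ C) {v : L} (hv : v ∈ C) (hv0 : v ≠ 0) :
    ∃ h e f, IsRootTriple C h e f ∧ ⟪h, v⟫_ℝ ≠ 0 := by
  obtain ⟨e, he, hve, hspan⟩ := exists_lie_lie_mem_span_singleton hC.isAbelian hv hv0
  let μ := ‖⁅v, e⁆‖
  have hμ : μ ≠ 0 := norm_ne_zero_iff.2 hve
  let f := μ⁻¹ • ⁅v, e⁆
  have hvf : ⁅v, e⁆ = μ • f := by simp [f, hμ]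
  have hinner (c : L) : ⟪⁅e, f⁆, c⟫_ℝ = -⟪e, ⁅c, f⁆⟫_ℝ := by
    rw [← lie_skew e f, inner_neg_left, inner_lie_left, ← lie_skew c f, inner_neg_right]
  have hcf (c : L) (hc : c ∈ C) : ⁅c, f⁆ = -⟪⁅e, f⁆, c⟫_ℝ • e := by
    obtain ⟨r, hr⟩ := Submodule.mem_span_singleton.1 (hspan c hc)
    have hr' : ⁅c, f⁆ = (μ⁻¹ * r) • e := by rw [lie_smul, ← hr, smul_smul]
    rw [hinner, hr', inner_smul_right, real_inner_self_eq_norm_sq, he]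
    simp
  have hhv : ⟪⁅e, f⁆, v⟫_ℝ = μ := by
    rw [hinner, ← inner_lie_left, inner_smul_right, real_inner_self_eq_norm_sq, sq,
      inv_mul_cancel_left₀ hμ]
  have hce (c : L) (hc : c ∈ C) : ⁅c, e⁆ = ⟪⁅e, f⁆, c⟫_ℝ • f := by
    refine smul_right_injective L hμ ?_
    calc μ • ⁅c, e⁆ = -⁅c, ⁅v, f⁆⁆ := by simp [hcf v hv, hhv]
      _ = -⁅v, ⁅c, f⁆⁆ := by rw [leibniz_lie, hC.isAbelian c hc v hv, zero_lie, zero_add]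
      _ = μ • ⟪⁅e, f⁆, c⟫_ℝ • f := by
        rw [hcf c hc, lie_smul, hvf, neg_smul, neg_neg, smul_comm]
  have hmem : ⁅e, f⁆ ∈ C := hC.mem_of_forall_lie_eq_zero _ trivial fun c hc ↦ by
    rw [leibniz_lie, hce c hc, hcf c hc]
    simp
  exact ⟨⁅e, f⁆, e, f, ⟨hmem, rfl, hce, hcf⟩, hhv ▸ hμ⟩

end RootTriple

section Weyl

variable {L : Type*} [CompactLieAlgebra L] [FiniteDimensional ℝ L] [LieAlgebra.IsKilling ℝ L]

lemma exists_mem_innerAut_eq_reflection {C : Submodule ℝ L} (hC : IsMaximalAbelianIn ⊤ C)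
    {v : C} (hv : v ≠ 0) : ∃ h : C, ⟪h, v⟫_ℝ ≠ 0 ∧
      ∃ φ ∈ innerAut L, ∀ c : C, φ c = ((ℝ ∙ h)ᗮ.reflection c : C) := by
  obtain ⟨h, e, f, H, hhv⟩ := exists_isRootTriple hC v.2 (by simpa using hv)
  refine ⟨⟨h, H.mem⟩, hhv, _, Submonoid.subset_closure ⟨(Real.pi / ‖h‖) • e, rfl⟩, fun c ↦ ?_⟩
  have hh : h ≠ 0 := fun h0 ↦ hhv (by simp [h0])
  simp only [map_smul]
  rw [H.exp_apply hh c.2, reflection_orthogonal_singleton_apply]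
  simp

lemma exists_mem_innerAut_mapsTo_and_fixed_eq_zero {C : Submodule ℝ L}
    (hC : IsMaximalAbelianIn ⊤ C) :
    ∃ φ ∈ innerAut L, (∀ c ∈ C, φ c ∈ C) ∧ ∀ c ∈ C, φ c = c → c = 0 := by
  let Γ : Submonoid (C ≃ₗᵢ[ℝ] C) :=
    { carrier := {w | ∃ φ ∈ innerAut L, ∀ c : C, φ c = w c}
      one_mem' := ⟨1, one_mem _, fun _ ↦ rfl⟩
      mul_mem' := fun ⟨φ, hφ, hφw⟩ ⟨ψ, hψ, hψw⟩ ↦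
        ⟨φ * ψ, mul_mem hφ hψ, fun c ↦ by simp [hφw, hψw]⟩ }
  obtain ⟨w, ⟨φ, hφ, hφw⟩, hw⟩ := exists_mem_forall_apply_eq_self_imp_eq_zero (Γ := Γ)
    fun v hv ↦ exists_mem_innerAut_eq_reflection hC hv
  refine ⟨φ, hφ, fun c hc ↦ hφw ⟨c, hc⟩ ▸ (w _).2, fun c hc hφc ↦ ?_⟩
  exact congrArg Subtype.val (hw ⟨c, hc⟩ (Subtype.ext ((hφw ⟨c, hc⟩).symm.trans hφc)))

lemma exists_isMaximalAbelianIn_top_le_orthogonal {C : Submodule ℝ L}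
    (hC : IsMaximalAbelianIn ⊤ C) : ∃ A, IsMaximalAbelianIn ⊤ A ∧ A ≤ Cᗮ := by
  obtain ⟨φ, hφ, hφC, hfix⟩ := exists_mem_innerAut_mapsTo_and_fixed_eq_zero hC
  have hnormal := isStarNormal_sub_one (innerAut_le_isometricAut hφ).1
  have hle : (φ - 1).ker ≤ Cᗮ := ker_le_orthogonal_of_isStarNormal hnormal
    (fun c hc ↦ C.sub_mem (hφC c hc) hc) fun c hc h ↦ hfix c hc (sub_eq_zero.1 h)
  obtain ⟨A, -, hA⟩ := isAbelianSubspace_bot.exists_isMaximalAbelianIn (M := (φ - 1).ker) bot_le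
  exact ⟨A, isMaximalAbelianIn_top_of_ker_sub_one hφ hA, hA.le.trans hle⟩

theorem exists_isCartanSubalgebra_le_orthogonal (C : LieSubalgebra ℝ L) [C.IsCartanSubalgebra] :
    ∃ C' : LieSubalgebra ℝ L, C'.IsCartanSubalgebra ∧ C'.toSubmodule ≤ C.toSubmoduleᗮ := by
  obtain ⟨A, hA, hAC⟩ := exists_isMaximalAbelianIn_top_le_orthogonal
    (isMaximalAbelianIn_top_of_isCartanSubalgebra C)
  obtain ⟨C', hC', rfl⟩ := exists_isCartanSubalgebra_toSubmodule_eq hA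
  exact ⟨C', hC', hAC⟩

end Weyl

end CompactLieAlgebra

section Killing

lemma isKilling_of_killingForm_self_ne_zero {R L : Type*} [CommRing R] [LieRing L]
    [LieAlgebra R L] (h : ∀ x : L, x ≠ 0 → killingForm R L x x ≠ 0) :
    LieAlgebra.IsKilling R L := by
  refine ⟨eq_bot_iff.2 fun x hx ↦ ?_⟩
  by_contra hx0
  exact h x hx0 ((LieIdeal.mem_killingCompl ..).1 hx x trivial)

/-- A real Lie algebra with negative definite Killing form `κ`, with the inner product `-κ`. -/
noncomputable abbrev CompactLieAlgebra.ofKillingForm {L : Type*} [LieRing L] [LieAlgebra ℝ L]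
    (hneg : ∀ x : L, x ≠ 0 → killingForm ℝ L x x < 0) : CompactLieAlgebra L :=
  let core : InnerProductSpace.Core ℝ L :=
    { inner x y := -killingForm ℝ L x y
      conj_inner_symm x y := by simp [LieModule.traceForm_comm ℝ L L x y]
      re_inner_nonneg x := by
        obtain rfl | hx := eq_or_ne x 0
        · simp
        · simpa using (hneg x hx).le
      add_left x y z := by simp [add_comm]
      smul_left x y r := by simp
      definite x hx := by
        by_contra h
        exact (hneg x h).ne (neg_eq_zero.1 hx) }
  { toNormedAddCommGroup := core.toNormedAddCommGroup
    toInnerProductSpace := .ofCore core.toCore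
    toBracket := inferInstance
    add_lie := add_lie
    lie_add := lie_add
    lie_self := lie_self
    leibniz_lie := leibniz_lie
    lie_smul := lie_smul
    inner_lie_left x y z := by
      change -killingForm ℝ L ⁅x, y⁆ z = - -killingForm ℝ L y ⁅x, z⁆
      rw [← LieModule.traceForm_apply_lie_apply ℝ L L y x z, ← lie_skew, map_neg,
        LinearMap.neg_apply] }

end Killing

end OrthogonalCartan

/-- Existence of orthogonal Cartan subalgebras: given any Cartan subalgebra `C` of a compact
semisimple real Lie algebra, there is a Cartan subalgebra `C'` orthogonal to it w.r.t. the
Killing form. -/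
theorem exists_orthogonal_cartan (L : Type*) [LieRing L] [LieAlgebra ℝ L] [FiniteDimensional ℝ L]
    (hneg : ∀ x : L, x ≠ 0 → killingForm ℝ L x x < 0)
    (C : LieSubalgebra ℝ L) (hC : C.IsCartanSubalgebra) :
    ∃ C' : LieSubalgebra ℝ L, C'.IsCartanSubalgebra ∧
      ∀ c ∈ C, ∀ c' ∈ C', killingForm ℝ L c c' = 0 := by
  have := OrthogonalCartan.isKilling_of_killingForm_self_ne_zero fun x hx ↦ (hneg x hx).ne
  let := OrthogonalCartan.CompactLieAlgebra.ofKillingForm hneg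
  obtain ⟨C', hC', hle⟩ :=
    OrthogonalCartan.CompactLieAlgebra.exists_isCartanSubalgebra_le_orthogonal C
  exact ⟨C', hC', fun c hc c' hc' ↦ neg_eq_zero.1 (hle hc' c hc)⟩
end

section
/- Let L be a finite-dimensional real Lie algebra whose Killing form κ is negative definite, and let a be a regular element of L. Then there exists a regular element b of L such that L = ⁅a, L⁆ + ⁅b, L⁆ (every x ∈ L can be written x = ⁅a, u⁆ + ⁅b, v⁆ for some u, v ∈ L), κ(a, b) = 0, and in fact the centralizers Z(a) = {x : ⁅a,x⁆ = 0} and Z(b) = {x : ⁅b,x⁆ = 0} are orthogonal: κ(x, y) = 0 for all x ∈ Z(a), y ∈ Z(b). -/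
/-!
For the inner product `-κ` the range of `ad a` is the orthogonal complement of `Z(a)`, so everything
follows once `Z(b)` is orthogonal to `Z(a)`. For that, find `φ` in the adjoint group which maps
`t = Z(a)` into itself and fixes no nonzero vector of it: if `φ` fixes `k ≠ 0` in `t`, choose a root
of `t` not vanishing at `k` and compose `φ` with the corresponding reflection, a rotation
`exp (ad u)`; this shrinks the fixed space of `φ` in `t`. Then `t = (φ - 1) t` is orthogonal to
`ker (φ - 1)`, and it remains to find `b` with `Z(b) ≤ ker (φ - 1)`.

Every element of the adjoint group has a fixed space of dimension at least the rank: this is clear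
near `1`, where the element is an exponential, and it propagates along analytic paths as the
vanishing of the low coefficients of a characteristic polynomial. Applied to `φ * exp (ad (s • z))`
with `φ z = z`, `z` generic and `s` small, this gives an abelian subalgebra of dimension at least
the rank inside `ker (φ - 1)`. A generic element of it commutes with some conjugate `b` of a regular
element, by minimizing an inner product over the compact automorphism group, and then `Z(b)` is that
subalgebra.
-/

set_option maxSynthPendingDepth 5

open scoped RealInnerProductSpace Topology
open Filter LieAlgebra Module NormedSpace

/-- The derivative at `1` of the action of invertible operators on bilinear products: `D` is a
derivation of the product `γ` exactly when `derivationDefect V D γ = 0`. -/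
noncomputable def derivationDefect (V : Type*) [NormedAddCommGroup V] [NormedSpace ℝ V] :
    (V →L[ℝ] V) →L[ℝ] (V →L[ℝ] V →L[ℝ] V) →L[ℝ] (V →L[ℝ] V →L[ℝ] V) :=
  (ContinuousLinearMap.compL ℝ V (V →L[ℝ] V) (V →L[ℝ] V)).comp (ContinuousLinearMap.compL ℝ V V V)
    - (ContinuousLinearMap.compL ℝ V V (V →L[ℝ] V)).flip
    - (ContinuousLinearMap.compL ℝ V (V →L[ℝ] V) (V →L[ℝ] V)).comp
        (ContinuousLinearMap.compL ℝ V V V).flip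

theorem derivationDefect_apply {V : Type*} [NormedAddCommGroup V] [NormedSpace ℝ V]
    (D : V →L[ℝ] V) (γ : V →L[ℝ] V →L[ℝ] V) (x y : V) :
    derivationDefect V D γ x y = D (γ x y) - γ (D x) y - γ x (D y) := rfl

section ExpFlow

variable {V : Type*} [NormedAddCommGroup V] [NormedSpace ℝ V] [CompleteSpace V]

theorem hasDerivAt_exp_smul_apply_s6 (T : V →L[ℝ] V) (x : V) (s : ℝ) :
    HasDerivAt (fun s : ℝ => exp (s • T) x) (T (exp (s • T) x)) s := by
  simpa using (hasDerivAt_exp_smul_const' T s).clm_apply (hasDerivAt_const s x)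

theorem exp_smul_apply_of_hasDerivAt {T : V →L[ℝ] V} {f : ℝ → V}
    (hf : ∀ s, HasDerivAt f (T (f s)) s) (s : ℝ) : exp (s • T) (f 0) = f s :=
  congrFun (ODE_solution_unique_univ (v := fun _ => T) (s := fun _ => Set.univ) (t₀ := 0)
    (fun _ => T.lipschitz.lipschitzOnWith)
    (fun s => ⟨hasDerivAt_exp_smul_apply_s6 T (f 0) s, Set.mem_univ _⟩)
    (fun s => ⟨hf s, Set.mem_univ _⟩) (by simp)) s

theorem exp_apply_of_apply_eq_zero {T : V →L[ℝ] V} {x : V} (hx : T x = 0) : exp T x = x := by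
  simpa using exp_smul_apply_of_hasDerivAt (T := T) (f := fun _ => x)
    (fun s => by simpa [hx] using hasDerivAt_const s x) 1

theorem eventually_apply_eq_zero_of_exp_apply_eq :
    ∀ᶠ T : V →L[ℝ] V in 𝓝 0, ∀ x, exp T x = x → T x = 0 := by
  have hexp : ∀ᶠ T : V →L[ℝ] V in 𝓝 0, ‖exp T - 1‖ < 1 / 2 := by
    have hcont : ContinuousAt (fun T : V →L[ℝ] V => ‖exp T - 1‖) 0 :=
      ((hasStrictFDerivAt_exp_zero (𝕂 := ℝ)).continuousAt.sub continuousAt_const).norm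
    exact hcont.eventually_lt continuousAt_const (by simp)
  obtain ⟨δ, hδ, hball⟩ := Metric.eventually_nhds_iff_ball.1 hexp
  filter_upwards [Metric.ball_mem_nhds 0 hδ] with T hT x hx
  have hderiv (s : ℝ) :
      HasDerivAt (fun s : ℝ => exp (s • T) x - s • T x) ((exp (s • T) - 1) (T x)) s := by
    have hcomm : T (exp (s • T) x) = exp (s • T) (T x) :=
      DFunLike.congr_fun ((Commute.refl T).smul_right s).exp_right.eq x
    exact ((hasDerivAt_exp_smul_apply_s6 T x s).sub ((hasDerivAt_id s).smul_const (T x))).congr_deriv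
      (by simp [hcomm])
  have hbound (s : ℝ) (hs : s ∈ Set.Ico (0 : ℝ) 1) :
      ‖(exp (s • T) - 1) (T x)‖ ≤ 1 / 2 * ‖T x‖ := by
    refine ContinuousLinearMap.le_of_opNorm_le _ (hball _ ?_).le _
    exact (convex_ball 0 δ).smul_mem_of_zero_mem (Metric.mem_ball_self hδ) hT ⟨hs.1, hs.2.le⟩
  have hmvt := norm_image_sub_le_of_norm_deriv_le_segment_01'
    (fun s _ => (hderiv s).hasDerivWithinAt) hbound
  simp only [one_smul, hx, zero_smul, exp_zero, one_apply_eq_self, sub_zero,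
    sub_sub_cancel_left, norm_neg] at hmvt
  exact norm_le_zero_iff.1 (by linarith)

theorem exp_rotation {T : V →L[ℝ] V} {v w : V} {ω : ℝ} (hv : T v = w) (hw : T w = -(ω ^ 2) • v)
    (s : ℝ) : exp (s • T) w = Real.cos (ω * s) • w - (ω * Real.sin (ω * s)) • v := by
  have hderiv (s : ℝ) : HasDerivAt
      (fun s : ℝ => Real.cos (ω * s) • w - (ω * Real.sin (ω * s)) • v)
      (T (Real.cos (ω * s) • w - (ω * Real.sin (ω * s)) • v)) s := by
    have hω : HasDerivAt (fun s : ℝ => ω * s) ω s := by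
      simpa using (hasDerivAt_id s).const_mul ω
    refine ((hω.cos.smul_const w).sub ((hω.sin.const_mul ω).smul_const v)).congr_deriv ?_
    simp only [map_sub, map_smul, hv, hw]
    module
  simpa using exp_smul_apply_of_hasDerivAt hderiv s

theorem exp_surjective (T : V →L[ℝ] V) : Function.Surjective (exp T : V →L[ℝ] V) := by
  let _ : NormedAlgebra ℚ (V →L[ℝ] V) := NormedAlgebra.restrictScalars ℚ ℝ _
  obtain ⟨S, hS⟩ := (isUnit_exp T).exists_right_inv
  exact fun x => ⟨S x, DFunLike.congr_fun hS x⟩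

theorem exp_derivationDefect_apply (D : V →L[ℝ] V) (γ : V →L[ℝ] V →L[ℝ] V) (x y : V) :
    exp (derivationDefect V D) γ (exp D x) (exp D y) = exp D (γ x y) := by
  set f : ℝ → V := fun s =>
    exp (s • derivationDefect V D) γ (exp (s • D) x) (exp (s • D) y)
  have hderiv (s : ℝ) : HasDerivAt f (D (f s)) s := by
    refine (((hasDerivAt_exp_smul_apply_s6 (derivationDefect V D) γ s).clm_apply
      (hasDerivAt_exp_smul_apply_s6 D x s)).clm_apply
      (hasDerivAt_exp_smul_apply_s6 D y s)).congr_deriv ?_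
    rw [add_apply, derivationDefect_apply]
    simp only [f]
    abel
  simpa [f] using (exp_smul_apply_of_hasDerivAt hderiv 1).symm

theorem exp_map_product_of_derivation {D : V →L[ℝ] V} {γ : V →L[ℝ] V →L[ℝ] V}
    (hD : derivationDefect V D γ = 0) (x y : V) : exp D (γ x y) = γ (exp D x) (exp D y) := by
  rw [← exp_derivationDefect_apply, exp_apply_of_apply_eq_zero hD]

theorem eventually_derivation_of_exp_map_product (γ : V →L[ℝ] V →L[ℝ] V) :
    ∀ᶠ D : V →L[ℝ] V in 𝓝 0, (∀ x y, exp D (γ x y) = γ (exp D x) (exp D y)) →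
      derivationDefect V D γ = 0 := by
  have htendsto : Tendsto (derivationDefect V) (𝓝 0) (𝓝 0) := by
    simpa using (derivationDefect V).continuous.tendsto 0
  filter_upwards [htendsto.eventually
    (eventually_apply_eq_zero_of_exp_apply_eq (V := V →L[ℝ] V →L[ℝ] V))] with D hD haut
  refine hD γ (ContinuousLinearMap.ext fun x => ContinuousLinearMap.ext fun y => ?_)
  obtain ⟨x, rfl⟩ := exp_surjective D x
  obtain ⟨y, rfl⟩ := exp_surjective D y
  rw [exp_derivationDefect_apply, haut]

end ExpFlow

section Kernel

theorem maxGenEigenspace_zero_eq_ker {R M : Type*} [CommRing R] [AddCommGroup M] [Module R M]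
    {T : End R M} (hT : Disjoint T.ker T.range) : T.maxGenEigenspace 0 = T.ker := by
  have hpow (k : ℕ) : ∀ x : M, (T ^ k) x = 0 → T x = 0 := by
    induction k with
    | zero => exact fun x hx => by rw [show x = 0 from hx, map_zero]
    | succ k ih => exact fun x hx =>
        Submodule.disjoint_def.1 hT _ (ih (T x) (by rwa [pow_succ] at hx)) ⟨x, rfl⟩
  ext x
  simp only [End.mem_maxGenEigenspace, zero_smul, sub_zero, LinearMap.mem_ker]
  exact ⟨fun ⟨k, hk⟩ => hpow k x hk, fun hx => ⟨1, by rwa [pow_one]⟩⟩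

variable {V : Type*} [NormedAddCommGroup V] [NormedSpace ℝ V] [FiniteDimensional ℝ V]

theorem eventually_ker_le_of_commute {T : V →L[ℝ] V} (hT : Disjoint T.ker T.range) :
    ∀ᶠ T' in 𝓝 T, Commute T' T → T'.ker ≤ T.ker := by
  have hinj : Function.Injective (T.comp T.range.subtypeL) := by
    rw [injective_iff_map_eq_zero]
    exact fun y hy => Subtype.ext (Submodule.disjoint_def.1 hT y hy y.2)
  have hcont : Continuous fun T' : V →L[ℝ] V => T'.comp T.range.subtypeL := by fun_prop
  filter_upwards [hcont.continuousAt.eventually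
    (ContinuousLinearMap.isOpen_injective.mem_nhds hinj)] with T' hT' hcomm x hx
  have hTx : T' (T x) = 0 := by
    rw [← mul_apply_eq_comp, hcomm.eq, mul_apply_eq_comp, show T' x = 0 from hx, map_zero]
  exact congr_arg Subtype.val (hT' (a₁ := ⟨T x, x, rfl⟩) (a₂ := 0) (by simpa using hTx))

theorem le_natTrailingDegree_charpoly_of_analytic {c : ℝ → V →L[ℝ] V}
    (hc : AnalyticOnNhd ℝ c Set.univ) {r : ℕ} {s₀ : ℝ}
    (hr : ∀ᶠ s in 𝓝 s₀, r ≤ (c s : V →ₗ[ℝ] V).charpoly.natTrailingDegree) (s : ℝ) :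
    r ≤ (c s : V →ₗ[ℝ] V).charpoly.natTrailingDegree := by
  refine Polynomial.le_natTrailingDegree (LinearMap.charpoly_monic _).ne_zero fun k hk => ?_
  let toEnd : (V →L[ℝ] V) →ₗ[ℝ] End ℝ V := ContinuousLinearMap.coeLM ℝ
  let basis := finBasis ℝ (V →L[ℝ] V)
  have hcoeff (s : ℝ) : MvPolynomial.aeval (basis.repr (c s))
      ((LinearMap.polyCharpoly toEnd basis).coeff k) = (c s : V →ₗ[ℝ] V).charpoly.coeff k :=
    LinearMap.polyCharpoly_coeff_eval toEnd basis (c s) k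
  have hanalytic : AnalyticOnNhd ℝ (fun s => (c s : V →ₗ[ℝ] V).charpoly.coeff k) Set.univ := by
    simp only [← hcoeff]
    refine AnalyticOnNhd.aeval_mvPolynomial (fun i s _ => ?_) _
    exact ((LinearMap.toContinuousLinearMap (basis.coord i)).analyticAt _).comp (hc s trivial)
  refine hanalytic.eqOn_zero_of_preconnected_of_eventuallyEq_zero isPreconnected_univ
    (Set.mem_univ s₀) ?_ (Set.mem_univ s)
  filter_upwards [hr] with s hs
  exact Polynomial.coeff_eq_zero_of_lt_natTrailingDegree (hk.trans_le hs)

end Kernel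

section Normal

variable {E : Type*} [NormedAddCommGroup E] [InnerProductSpace ℝ E] [FiniteDimensional ℝ E]

theorem range_le_orthogonal_ker_of_isStarNormal {T : E →L[ℝ] E} (hT : IsStarNormal T) :
    T.range ≤ T.kerᗮ := by
  rw [← ContinuousLinearMap.IsStarNormal.orthogonal_range hT]
  exact Submodule.le_orthogonal_orthogonal _

theorem disjoint_ker_range_of_isStarNormal {T : E →L[ℝ] E} (hT : IsStarNormal T) :
    Disjoint T.ker T.range :=
  T.ker.orthogonal_disjoint.mono_right (range_le_orthogonal_ker_of_isStarNormal hT)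

theorem natTrailingDegree_charpoly_of_isStarNormal {T : E →L[ℝ] E} (hT : IsStarNormal T) :
    (T : E →ₗ[ℝ] E).charpoly.natTrailingDegree = finrank ℝ T.ker := by
  rw [← LinearMap.finrank_maxGenEigenspace_zero_eq,
    maxGenEigenspace_zero_eq_ker (disjoint_ker_range_of_isStarNormal hT)]

theorem isOrtho_ker_of_isStarNormal {T : E →L[ℝ] E} (hT : IsStarNormal T) {K : Submodule ℝ E}
    (hK : ∀ k ∈ K, T k ∈ K) (hdisj : Disjoint K T.ker) : K ⟂ T.ker := by
  have hinj : Function.Injective ((T : E →ₗ[ℝ] E).restrict hK) := by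
    rw [injective_iff_map_eq_zero]
    exact fun k hk => Subtype.ext
      (Submodule.disjoint_def.1 hdisj k k.2 (congr_arg Subtype.val hk))
  refine le_trans (fun k hk => ?_) (range_le_orthogonal_ker_of_isStarNormal hT)
  obtain ⟨l, hl⟩ := LinearMap.surjective_of_injective hinj ⟨k, hk⟩
  exact ⟨l, congr_arg Subtype.val hl⟩

end Normal

/-- A Lie algebra over `ℝ` with an inner product for which every `ad x` is skew-adjoint, such as
`-κ` when the Killing form `κ` is negative definite. The norm is part of the structure so that
operators on `L` can be exponentiated. -/
class CompactLieAlgebra (L : Type*) extends NormedAddCommGroup L, InnerProductSpace ℝ L,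
    LieRing L, LieAlgebra ℝ L where
  inner_lie_left (x y z : L) : ⟪⁅x, y⁆, z⟫ = -⟪y, ⁅x, z⁆⟫

namespace CompactLieAlgebra

variable {L : Type*} [CompactLieAlgebra L]

theorem lie_lie_self_eq_zero_iff {a u : L} : ⁅a, ⁅a, u⁆⁆ = 0 ↔ ⁅a, u⁆ = 0 := by
  refine ⟨fun h => ?_, fun h => by rw [h, lie_zero]⟩
  rw [← inner_self_eq_zero (𝕜 := ℝ), inner_lie_left, h, inner_zero_right, neg_zero]

variable [FiniteDimensional ℝ L]

/-- The adjoint representation, as a continuous bilinear map. -/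
noncomputable def adL : L →L[ℝ] L →L[ℝ] L :=
  (ad ℝ L : L →ₗ[ℝ] End ℝ L).toContinuousBilinearMap

theorem adL_apply (x y : L) : adL x y = ⁅x, y⁆ := rfl

theorem adL_mem_skewAdjoint (x : L) : adL x ∈ skewAdjoint (L →L[ℝ] L) := by
  refine skewAdjoint.mem_iff.2 (ContinuousLinearMap.ext fun y => ext_inner_right ℝ fun z => ?_)
  rw [ContinuousLinearMap.star_eq_adjoint, ContinuousLinearMap.adjoint_inner_left]
  simp only [adL_apply, neg_apply, inner_neg_left, inner_lie_left, neg_neg]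

theorem isStarNormal_adL (x : L) : IsStarNormal (adL x) :=
  skewAdjoint.isStarNormal_of_mem (adL_mem_skewAdjoint x)

theorem disjoint_ker_range_adL (x : L) : Disjoint (adL x).ker (adL x).range :=
  disjoint_ker_range_of_isStarNormal (isStarNormal_adL x)

theorem rank_le_finrank_ker_adL (x : L) : rank ℝ L ≤ finrank ℝ (adL x).ker := by
  rw [← natTrailingDegree_charpoly_of_isStarNormal (isStarNormal_adL x)]
  exact rank_le_natTrailingDegree_charpoly_ad ℝ x

theorem isRegular_iff_finrank_ker_adL {x : L} :
    IsRegular ℝ x ↔ finrank ℝ (adL x).ker = rank ℝ L := by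
  rw [← natTrailingDegree_charpoly_of_isStarNormal (isStarNormal_adL x)]
  exact isRegular_iff_natTrailingDegree_charpoly_eq_rank ℝ x

theorem commute_adL_of_lie_eq_zero {x y : L} (h : ⁅x, y⁆ = 0) : Commute (adL x) (adL y) := by
  ext z
  simp only [mul_apply_eq_comp, adL_apply]
  rw [leibniz_lie, h, zero_lie, zero_add]

variable (L) in
/-- The bracket-preserving isometries of `L`. -/
noncomputable def isometricAut : Submonoid (L →L[ℝ] L) where
  carrier := {φ | φ ∈ unitary (L →L[ℝ] L) ∧ ∀ x y, φ ⁅x, y⁆ = ⁅φ x, φ y⁆}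
  mul_mem' hφ hψ := ⟨mul_mem hφ.1 hψ.1, fun x y => by simp only [mul_apply_eq_comp, hψ.2, hφ.2]⟩
  one_mem' := ⟨one_mem _, fun _ _ => rfl⟩

theorem inner_map_map_of_mem_isometricAut {φ : L →L[ℝ] L} (hφ : φ ∈ isometricAut L) (x y : L) :
    ⟪φ x, φ y⟫ = ⟪x, y⟫ :=
  ContinuousLinearMap.inner_map_map_of_mem_unitary hφ.1 x y

theorem isStarNormal_sub_one_of_mem_isometricAut {φ : L →L[ℝ] L} (hφ : φ ∈ isometricAut L) :
    IsStarNormal (φ - 1) :=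
  have := isStarNormal_of_mem_unitary hφ.1
  Commute.isStarNormal_sub (by rw [star_one]; exact .one_right φ)

theorem isCompact_isometricAut : IsCompact (isometricAut L : Set (L →L[ℝ] L)) := by
  have hclosed : IsClosed {φ : L →L[ℝ] L | ∀ x y, φ ⁅x, y⁆ = ⁅φ x, φ y⁆} := by
    simp only [Set.ofPred_forall]
    exact isClosed_iInter fun x => isClosed_iInter fun y => isClosed_eq (by fun_prop)
      (Continuous.clm_apply (adL.continuous.comp (by fun_prop)) (by fun_prop))
  refine Metric.isCompact_of_isClosed_isBounded (isClosed_unitary.inter hclosed)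
    (isBounded_iff_forall_norm_le.2 ⟨1, fun φ hφ => φ.opNorm_le_bound zero_le_one fun x => ?_⟩)
  rw [ContinuousLinearMap.norm_map_of_mem_unitary hφ.1, one_mul]

theorem exp_adL_mem_isometricAut (x : L) : exp (adL x) ∈ isometricAut L := by
  let _ : NormedAlgebra ℚ (L →L[ℝ] L) := NormedAlgebra.restrictScalars ℚ ℝ _
  refine ⟨exp_mem_unitary_of_mem_skewAdjoint (adL_mem_skewAdjoint x),
    exp_map_product_of_derivation (γ := adL) ?_⟩
  ext y z
  rw [derivationDefect_apply]
  simp only [adL_apply, leibniz_lie x y z, zero_apply]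
  abel

theorem eventually_exists_exp_adL_eq [IsKilling ℝ L] :
    ∀ᶠ φ in 𝓝 (1 : L →L[ℝ] L), φ ∈ isometricAut L → ∃ y, exp (adL y) = φ := by
  have hnhds := (hasStrictFDerivAt_exp_zero (𝕂 := ℝ) (𝔸 := L →L[ℝ] L)).map_nhds_eq_of_equiv
    (f' := ContinuousLinearEquiv.refl ℝ _)
  rw [exp_zero] at hnhds
  rw [← hnhds, eventually_map]
  filter_upwards [eventually_derivation_of_exp_map_product adL] with D hD hφ
  have hleibniz (x y : L) : D ⁅x, y⁆ = ⁅x, D y⁆ - ⁅y, D x⁆ := by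
    have h := DFunLike.congr_fun (DFunLike.congr_fun (hD hφ.2) x) y
    rw [derivationDefect_apply, sub_sub] at h
    rw [← lie_skew y, sub_neg_eq_add, add_comm]
    exact sub_eq_zero.1 h
  obtain ⟨y, hy⟩ := LieDerivation.IsKilling.exists_eq_ad ⟨(D : L →ₗ[ℝ] L), hleibniz⟩
  refine ⟨y, congr_arg exp (ContinuousLinearMap.ext fun x => ?_)⟩
  rw [adL_apply, ← ad_apply (R := ℝ), ← LieDerivation.coe_ad_apply_eq_ad_apply, hy]
  rfl

variable (L) in
/-- The group generated by the inner automorphisms `exp (ad x)`, viewed as a monoid of operators. -/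
noncomputable def adjointGroup : Submonoid (L →L[ℝ] L) :=
  Submonoid.closure (Set.range fun x : L => exp (adL x))

theorem exp_adL_mem_adjointGroup (x : L) : exp (adL x) ∈ adjointGroup L :=
  Submonoid.subset_closure ⟨x, rfl⟩

theorem adjointGroup_le_isometricAut : adjointGroup L ≤ isometricAut L :=
  Submonoid.closure_le.2 (Set.range_subset_iff.2 exp_adL_mem_isometricAut)

theorem exists_analytic_path_of_mem_adjointGroup {φ : L →L[ℝ] L} (hφ : φ ∈ adjointGroup L) :
    ∃ c : ℝ → L →L[ℝ] L, AnalyticOnNhd ℝ c Set.univ ∧ c 0 = 1 ∧ c 1 = φ ∧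
      ∀ s, c s ∈ isometricAut L := by
  induction hφ using Submonoid.closure_induction with
  | mem φ hφ =>
    obtain ⟨x, rfl⟩ := hφ
    refine ⟨fun s => exp (adL (s • x)), fun s _ => ?_, by simp, by simp,
      fun s => exp_adL_mem_isometricAut _⟩
    have hexp : AnalyticAt ℝ (exp : (L →L[ℝ] L) → L →L[ℝ] L) (adL (s • x)) := exp_analytic _
    have hline : AnalyticAt ℝ (fun s : ℝ => adL (s • x)) s := by
      simp only [map_smul]
      fun_prop
    exact AnalyticAt.comp_of_eq hexp hline rfl
  | one => exact ⟨fun _ => 1, analyticOnNhd_const, rfl, rfl, fun _ => one_mem _⟩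
  | mul φ ψ _ _ hφ hψ =>
    obtain ⟨c, hc, hc₀, hc₁, hcL⟩ := hφ
    obtain ⟨d, hd, hd₀, hd₁, hdL⟩ := hψ
    exact ⟨c * d, hc.mul hd, by simp [hc₀, hd₀], by simp [hc₁, hd₁],
      fun s => mul_mem (hcL s) (hdL s)⟩

theorem rank_le_finrank_ker_sub_one [IsKilling ℝ L] {φ : L →L[ℝ] L} (hφ : φ ∈ adjointGroup L) :
    rank ℝ L ≤ finrank ℝ (φ - 1).ker := by
  obtain ⟨c, hc, hc₀, rfl, hcL⟩ := exists_analytic_path_of_mem_adjointGroup hφ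
  have hnormal (s : ℝ) := natTrailingDegree_charpoly_of_isStarNormal
    (isStarNormal_sub_one_of_mem_isometricAut (hcL s))
  rw [← hnormal]
  refine le_natTrailingDegree_charpoly_of_analytic (s₀ := 0)
    (c := fun s => c s - 1) (hc.sub analyticOnNhd_const) ?_ 1
  have hcont : Tendsto c (𝓝 0) (𝓝 1) := hc₀ ▸ (hc 0 trivial).continuousAt.tendsto
  filter_upwards [hcont.eventually eventually_exists_exp_adL_eq] with s hs
  obtain ⟨y, hy⟩ := hs (hcL s)
  rw [hnormal, ← hy]
  refine (rank_le_finrank_ker_adL y).trans (Submodule.finrank_mono fun x hx => ?_)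
  exact sub_eq_zero.2 (exp_apply_of_apply_eq_zero hx)

theorem lie_eq_zero_of_minimalFor {K M : Submodule ℝ L} {z x y : L}
    (hz : MinimalFor (· ∈ K) (fun z => (adL z).ker ⊓ M) z)
    (hx : x ∈ (adL z).ker ⊓ K) (hy : y ∈ (adL z).ker ⊓ M) : ⁅x, y⁆ = 0 := by
  have hzx : ⁅z, x⁆ = 0 := hx.1
  -- For small `c ≠ 0` the kernel of `ad (z + c • x)` lies in that of `ad z`; minimality then puts
  -- `y` in it.
  have hperturb : Tendsto (fun c : ℝ => adL (z + c • x)) (𝓝[≠] 0) (𝓝 (adL z)) := by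
    have : Continuous fun c : ℝ => adL (z + c • x) := by fun_prop
    simpa using (this.tendsto 0).mono_left nhdsWithin_le_nhds
  obtain ⟨c, hker, hc⟩ := ((hperturb.eventually
    (eventually_ker_le_of_commute (disjoint_ker_range_adL z))).and self_mem_nhdsWithin).exists
  have hcomm : Commute (adL (z + c • x)) (adL z) :=
    commute_adL_of_lie_eq_zero (by rw [add_lie, smul_lie, lie_self, ← lie_skew, hzx]; simp)
  have hy' : ⁅z + c • x, y⁆ = 0 :=
    (hz.2 (add_mem hz.1 (K.smul_mem c hx.2)) (inf_le_inf_right M (hker hcomm)) hy).1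
  rw [add_lie, smul_lie, show ⁅z, y⁆ = 0 from hy.1, zero_add] at hy'
  exact (smul_eq_zero.1 hy').resolve_left hc

theorem lie_eq_zero_of_mem_ker_adL {a x y : L} (ha : IsRegular ℝ a) (hx : x ∈ (adL a).ker)
    (hy : y ∈ (adL a).ker) : ⁅x, y⁆ = 0 := by
  refine lie_eq_zero_of_minimalFor (K := ⊤) (M := ⊤) (z := a) ⟨trivial, fun z _ hle => ?_⟩
    ⟨hx, trivial⟩ ⟨hy, trivial⟩
  simp only [inf_top_eq] at hle ⊢
  refine (Submodule.eq_of_le_of_finrank_le hle ?_).ge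
  rw [isRegular_iff_finrank_ker_adL.1 ha]
  exact rank_le_finrank_ker_adL z

theorem exists_joint_eigenvector [IsKilling ℝ L] {a k₀ : L} (ha : IsRegular ℝ a)
    (hk₀ : k₀ ≠ 0) :
    ∃ (χ : (adL a).ker → ℝ) (u : L), (∀ k : (adL a).ker, ⁅(k : L), ⁅a, u⁆⁆ = χ k • u) ∧
      ⁅k₀, u⁆ ≠ 0 := by
  have haa : a ∈ (adL a).ker := lie_self a
  have hcomm (k l : (adL a).ker) : Commute (adL (k : L)) (adL (l : L)) :=
    commute_adL_of_lie_eq_zero (lie_eq_zero_of_mem_ker_adL ha k.2 l.2)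
  -- The `adL k` are skew, without real eigenvectors; their products with `adL a` are self-adjoint.
  let T (k : (adL a).ker) : L →ₗ[ℝ] L := ((adL (k : L) * adL a : L →L[ℝ] L) : L →ₗ[ℝ] L)
  have hsymm (k : (adL a).ker) : (T k).IsSymmetric := by
    refine ContinuousLinearMap.isSelfAdjoint_iff_isSymmetric.1 ?_
    rw [isSelfAdjoint_iff, star_mul, skewAdjoint.mem_iff.1 (adL_mem_skewAdjoint _),
      skewAdjoint.mem_iff.1 (adL_mem_skewAdjoint _), neg_mul_neg, (hcomm k ⟨a, haa⟩).eq]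
  have hcommT : Pairwise (Function.onFun Commute T) := fun k l _ => by
    have h : Commute (adL (k : L) * adL a) (adL (l : L) * adL a) :=
      ((hcomm k l).mul_right (hcomm k ⟨a, haa⟩)).mul_left
        ((hcomm ⟨a, haa⟩ l).mul_right (.refl _))
    exact congr_arg ContinuousLinearMap.toLinearMap h.eq
  by_contra! hker
  have htop : ⊤ ≤ (adL k₀).ker := by
    rw [← LinearMap.IsSymmetric.iSup_iInf_eq_top_of_commute hsymm hcommT]
    refine iSup_le fun χ u hu => hker χ u fun k => ?_
    exact End.mem_eigenspace_iff.1 ((Submodule.mem_iInf _).1 hu k)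
  refine hk₀ ((LieDerivation.IsKilling.ad_apply_eq_zero_iff ℝ L k₀).1 ?_)
  ext y
  rw [LieDerivation.ad_apply_apply]
  exact htop (Submodule.mem_top (x := y))

theorem exists_root_vector [IsKilling ℝ L] {a k₀ : L} (ha : IsRegular ℝ a)
    (hk₀ : k₀ ∈ (adL a).ker) (hne : k₀ ≠ 0) :
    ∃ u w : L, ‖w‖ = 1 ∧ ⁅k₀, u⁆ ≠ 0 ∧ (∀ k ∈ (adL a).ker, ∃ c : ℝ, ⁅k, u⁆ = c • w) ∧
      ∃ d : ℝ, ⁅a, w⁆ = d • u := by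
  obtain ⟨χ, u, hu, hku⟩ := exists_joint_eigenvector ha hne
  have hau : ⁅a, u⁆ ≠ 0 := fun h => hku (lie_eq_zero_of_mem_ker_adL ha hk₀ h)
  have haau : ⁅a, ⁅a, u⁆⁆ = χ ⟨a, lie_self a⟩ • u := hu ⟨a, lie_self a⟩
  set χa := χ ⟨a, lie_self a⟩
  have hχa : χa ≠ 0 := fun h =>
    hau (lie_lie_self_eq_zero_iff.1 (by rw [haau, h, zero_smul]))
  have hroot (k : (adL a).ker) : ⁅(k : L), u⁆ = (χ k / χa) • ⁅a, u⁆ := by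
    have hak : ⁅a, (k : L)⁆ = 0 := k.2
    have : χa • ⁅(k : L), u⁆ = χ k • ⁅a, u⁆ := by
      rw [← lie_smul, ← haau, ← lie_smul, ← hu k, leibniz_lie a (k : L), hak, zero_lie,
        zero_add]
    rw [div_eq_inv_mul, mul_smul, ← this, inv_smul_smul₀ hχa]
  have hnorm : ‖⁅a, u⁆‖ ≠ 0 := norm_ne_zero_iff.2 hau
  refine ⟨u, ‖⁅a, u⁆‖⁻¹ • ⁅a, u⁆, by rw [norm_smul, norm_inv, norm_norm, inv_mul_cancel₀ hnorm],
    hku, fun k hk => ⟨χ ⟨k, hk⟩ / χa * ‖⁅a, u⁆‖, ?_⟩, ‖⁅a, u⁆‖⁻¹ * χa, ?_⟩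
  · rw [hroot ⟨k, hk⟩, smul_smul, mul_assoc, mul_inv_cancel₀ hnorm, mul_one]
  · rw [lie_smul, haau, smul_smul]

theorem exists_lie_eq_inner_smul [IsKilling ℝ L] {a k₀ : L} (ha : IsRegular ℝ a)
    (hk₀ : k₀ ∈ (adL a).ker) (hne : k₀ ≠ 0) :
    ∃ u w : L, ⁅u, w⁆ ∈ (adL a).ker ∧ ⟪⁅u, w⁆, k₀⟫ ≠ 0 ∧
      ∀ k ∈ (adL a).ker, ⁅k, u⁆ = ⟪⁅u, w⁆, k⟫ • w := by
  obtain ⟨u, w, hw, hk₀u, hroot, d, hd⟩ := exists_root_vector ha hk₀ hne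
  have hlie (k : L) (hk : k ∈ (adL a).ker) : ⁅k, u⁆ = ⟪⁅u, w⁆, k⟫ • w := by
    obtain ⟨c, hc⟩ := hroot k hk
    rw [inner_lie_left, ← lie_skew u k, inner_neg_right, neg_neg, hc, inner_smul_right,
      real_inner_self_eq_norm_sq, hw, one_pow, mul_one]
  obtain ⟨c, hc⟩ := hroot a (lie_self a)
  refine ⟨u, w, ?_, fun h => hk₀u ?_, hlie⟩
  · change ⁅a, ⁅u, w⁆⁆ = 0
    rw [leibniz_lie, hc, hd, smul_lie, lie_self, lie_smul, lie_self, smul_zero, smul_zero, add_zero]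
  · rw [hlie k₀ hk₀, h, zero_smul]

theorem exists_reflection_mem_adjointGroup [IsKilling ℝ L] {a k₀ : L} (ha : IsRegular ℝ a)
    (hk₀ : k₀ ∈ (adL a).ker) (hne : k₀ ≠ 0) :
    ∃ H ∈ (adL a).ker, ⟪H, k₀⟫ ≠ 0 ∧
      ∃ σ ∈ adjointGroup L, ∀ k ∈ (adL a).ker, σ k = (ℝ ∙ H)ᗮ.reflection k := by
  obtain ⟨u, w, hH, hHk₀, hlie⟩ := exists_lie_eq_inner_smul ha hk₀ hne
  set H := ⁅u, w⁆ with hHdef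
  have hH₀ : ‖H‖ ≠ 0 := fun h => hHk₀ (by rw [norm_eq_zero.1 h, inner_zero_left])
  have huH : adL u H = -(‖H‖ ^ 2) • w := by
    rw [adL_apply, ← lie_skew, hlie H hH, real_inner_self_eq_norm_sq, neg_smul]
  refine ⟨H, hH, hHk₀, exp (adL ((Real.pi / ‖H‖) • u)), exp_adL_mem_adjointGroup _,
    fun k hk => ?_⟩
  obtain ⟨p, hp, q, hq, rfl⟩ := (ℝ ∙ H).exists_add_mem_mem_orthogonal k
  obtain ⟨c, rfl⟩ := Submodule.mem_span_singleton.1 hp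
  have hq' : adL u q = 0 := by
    have hqa : q ∈ (adL a).ker := by simpa using sub_mem hk (Submodule.smul_mem _ c hH)
    rw [adL_apply, ← lie_skew, hlie q hqa,
      Submodule.mem_orthogonal_singleton_iff_inner_right.1 hq, zero_smul, neg_zero]
  have hrot : exp (adL ((Real.pi / ‖H‖) • u)) H = -H := by
    rw [map_smul, exp_rotation hHdef.symm huH, mul_div_cancel₀ _ hH₀, Real.cos_pi, Real.sin_pi,
      mul_zero, zero_smul, sub_zero, neg_one_smul]
  have hfix : exp (adL ((Real.pi / ‖H‖) • u)) q = q :=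
    exp_apply_of_apply_eq_zero (by rw [map_smul, smul_apply, hq', smul_zero])
  rw [map_add, map_add, map_smul _ c H, map_smul _ c H, hrot, hfix,
    Submodule.reflection_orthogonalComplement_singleton_eq_neg,
    Submodule.reflection_mem_subspace_eq_self hq]

theorem exists_mem_adjointGroup_disjoint_ker_sub_one [IsKilling ℝ L] {a : L}
    (ha : IsRegular ℝ a) :
    ∃ φ ∈ adjointGroup L, (∀ k ∈ (adL a).ker, φ k ∈ (adL a).ker) ∧
      Disjoint (adL a).ker (φ - 1).ker := by
  obtain ⟨φ, ⟨hφ, hφt⟩, hmin⟩ := exists_minimalFor_of_wellFoundedLT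
    (fun φ => φ ∈ adjointGroup L ∧ ∀ k ∈ (adL a).ker, φ k ∈ (adL a).ker)
    (fun φ => (φ - 1).ker ⊓ (adL a).ker) ⟨1, one_mem _, fun _ hk => hk⟩
  refine ⟨φ, hφ, hφt, Submodule.disjoint_def.2 fun k₀ hk₀ hfix => by_contra fun hne => ?_⟩
  obtain ⟨H, hH, hHk₀, σ, hσ, hσt⟩ := exists_reflection_mem_adjointGroup ha hk₀ hne
  have hσH (k : L) (hk : k ∈ (adL a).ker) : ∃ c : ℝ, σ k = k - c • H := by
    refine ⟨2 * (⟪H, k⟫ / ‖H‖ ^ 2), ?_⟩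
    rw [hσt k hk, Submodule.reflection_orthogonal_apply, Submodule.reflection_singleton_apply,
      RCLike.ofReal_real_eq_id, id_eq]
    module
  have hfixσ (k : L) (hk : k ∈ (φ * σ - 1).ker ⊓ (adL a).ker) : σ k = k := by
    obtain ⟨c, hc⟩ := hσH k hk.2
    have hinner : ⟪σ k, k₀⟫ = ⟪k, k₀⟫ := by
      rw [← inner_map_map_of_mem_isometricAut (adjointGroup_le_isometricAut hφ),
        show φ k₀ = k₀ from sub_eq_zero.1 hfix, show φ (σ k) = k from sub_eq_zero.1 hk.1]
    have hc₀ : c = 0 := by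
      simpa [hc, inner_sub_left, inner_smul_left, hHk₀] using hinner
    rw [hc, hc₀, zero_smul, sub_zero]
  have hle : (φ * σ - 1).ker ⊓ (adL a).ker ≤ (φ - 1).ker ⊓ (adL a).ker := fun k hk => by
    refine ⟨sub_eq_zero.2 ?_, hk.2⟩
    simpa [hfixσ k hk] using sub_eq_zero.1 hk.1
  have hσk₀ : σ k₀ = k₀ := hfixσ k₀ (hmin ⟨mul_mem hφ hσ, fun k hk => hφt _ ?_⟩ hle ⟨hfix, hk₀⟩)
  · rw [hσt k₀ hk₀, Submodule.reflection_eq_self_iff,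
      Submodule.mem_orthogonal_singleton_iff_inner_right] at hσk₀
    exact hHk₀ hσk₀
  · obtain ⟨c, hc⟩ := hσH k hk
    exact hc ▸ sub_mem hk (Submodule.smul_mem _ c hH)

theorem map_eq_zero_of_mem_isometricAut {φ : L →L[ℝ] L} (hφ : φ ∈ isometricAut L) {x : L}
    (hx : φ x = 0) : x = 0 := by
  rwa [← norm_eq_zero, ContinuousLinearMap.norm_map_of_mem_unitary hφ.1, norm_eq_zero] at hx

theorem isRegular_map_of_mem_isometricAut {φ : L →L[ℝ] L} (hφ : φ ∈ isometricAut L) {a : L}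
    (ha : IsRegular ℝ a) : IsRegular ℝ (φ a) := by
  have hker : (adL (φ a)).ker ≤ (adL a).ker.map (φ : L →ₗ[ℝ] L) := fun y hy => by
    have hy' : φ (star φ y) = y := DFunLike.congr_fun (Unitary.mul_star_self_of_mem hφ.1) y
    refine ⟨star φ y, map_eq_zero_of_mem_isometricAut hφ ?_, hy'⟩
    change φ ⁅a, star φ y⁆ = 0
    rwa [hφ.2, hy']
  refine isRegular_iff_finrank_ker_adL.2 (le_antisymm ?_ (rank_le_finrank_ker_adL _))
  rw [← isRegular_iff_finrank_ker_adL.1 ha]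
  exact (Submodule.finrank_mono hker).trans (Submodule.finrank_map_le _ _)

theorem exists_mem_isometricAut_lie_eq_zero (a b : L) :
    ∃ θ ∈ isometricAut L, ⁅b, θ a⁆ = 0 := by
  obtain ⟨θ, hθ, hmin⟩ := isCompact_isometricAut.exists_isMinOn ⟨1, one_mem (isometricAut L)⟩
    (f := fun φ : L →L[ℝ] L => ⟪φ a, b⟫) (by fun_prop)
  refine ⟨θ, hθ, ?_⟩
  set u := ⁅b, θ a⁆
  have hderiv : HasDerivAt (fun s : ℝ => ⟪exp (s • adL u) (θ a), b⟫) ⟪⁅u, θ a⁆, b⟫ 0 := by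
    simpa [adL_apply] using (hasDerivAt_exp_smul_apply_s6 (adL u) (θ a) 0).inner ℝ
      (hasDerivAt_const (0 : ℝ) b)
  have hlocmin : IsLocalMin (fun s : ℝ => ⟪exp (s • adL u) (θ a), b⟫) 0 :=
    Eventually.of_forall fun s => by
      simpa using hmin (mul_mem (exp_adL_mem_isometricAut (s • u)) hθ)
  have hzero := hlocmin.hasDerivAt_eq_zero hderiv
  rw [← lie_skew, inner_neg_left, inner_lie_left, neg_neg, ← lie_skew, inner_neg_right,
    neg_eq_zero] at hzero
  exact inner_self_eq_zero.1 hzero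

theorem exists_mem_adjointGroup_ker_sub_one_le {φ : L →L[ℝ] L} (hφ : φ ∈ adjointGroup L) {z : L}
    (hz : φ z = z) :
    ∃ ψ ∈ adjointGroup L, (ψ - 1).ker ≤ (adL z).ker ⊓ (φ - 1).ker := by
  have hφL := adjointGroup_le_isometricAut hφ
  have hcomm (s : ℝ) : Commute φ (adL (s • z)) := by
    ext x
    rw [mul_apply_eq_comp, mul_apply_eq_comp, adL_apply, adL_apply, hφL.2, map_smul, hz]
  have hsmall : Tendsto (fun s : ℝ => adL (s • z)) (𝓝[≠] 0) (𝓝 0) := by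
    have : Continuous fun s : ℝ => adL (s • z) := by fun_prop
    simpa using (this.tendsto 0).mono_left nhdsWithin_le_nhds
  have hperturb : Tendsto (fun s : ℝ => φ * exp (adL (s • z)) - 1) (𝓝[≠] 0) (𝓝 (φ - 1)) := by
    have hexp := (hasStrictFDerivAt_exp_zero (𝕂 := ℝ) (𝔸 := L →L[ℝ] L)).continuousAt.tendsto
    simpa using ((hexp.comp hsmall).const_mul φ).sub_const 1
  obtain ⟨s, ⟨hker, hlog⟩, hs⟩ := (((hperturb.eventually (eventually_ker_le_of_commute
    (disjoint_ker_range_of_isStarNormal (isStarNormal_sub_one_of_mem_isometricAut hφL)))).and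
    (hsmall.eventually eventually_apply_eq_zero_of_exp_apply_eq)).and self_mem_nhdsWithin).exists
  refine ⟨φ * exp (adL (s • z)), mul_mem hφ (exp_adL_mem_adjointGroup _), fun x hx => ?_⟩
  have hφx : x ∈ (φ - 1).ker := hker ((((Commute.refl φ).mul_left
    (hcomm s).exp_right.symm).sub_left (.one_left φ)).sub_right (.one_right _)) hx
  have hexp : exp (adL (s • z)) x = x := sub_eq_zero.1 <| by
    refine map_eq_zero_of_mem_isometricAut hφL ?_
    rw [map_sub, show φ (exp (adL (s • z)) x) = x from sub_eq_zero.1 hx,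
      show φ x = x from sub_eq_zero.1 hφx, sub_self]
  have hlie := hlog x hexp
  rw [map_smul, smul_apply] at hlie
  exact ⟨(smul_eq_zero.1 hlie).resolve_left hs, hφx⟩

theorem exists_abelian_le_ker_sub_one [IsKilling ℝ L] {φ : L →L[ℝ] L} (hφ : φ ∈ adjointGroup L) :
    ∃ A : Submodule ℝ L, A ≤ (φ - 1).ker ∧ (∀ x ∈ A, ∀ y ∈ A, ⁅x, y⁆ = 0) ∧
      rank ℝ L ≤ finrank ℝ A := by
  obtain ⟨z, hz⟩ := exists_minimalFor_of_wellFoundedLT (· ∈ (φ - 1).ker)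
    (fun z : L => (adL z).ker ⊓ (φ - 1).ker) ⟨0, zero_mem _⟩
  obtain ⟨ψ, hψ, hle⟩ := exists_mem_adjointGroup_ker_sub_one_le hφ (sub_eq_zero.1 hz.1)
  exact ⟨(adL z).ker ⊓ (φ - 1).ker, inf_le_right,
    fun x hx y hy => lie_eq_zero_of_minimalFor hz hx hy,
    (rank_le_finrank_ker_sub_one hψ).trans (Submodule.finrank_mono hle)⟩

theorem exists_isRegular_ker_adL_eq {A : Submodule ℝ L} (hA : ∀ x ∈ A, ∀ y ∈ A, ⁅x, y⁆ = 0)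
    (hrank : rank ℝ L ≤ finrank ℝ A) : ∃ b : L, IsRegular ℝ b ∧ (adL b).ker = A := by
  obtain ⟨a, ha⟩ := LieAlgebra.exists_isRegular ℝ L
  obtain ⟨z, hz⟩ := exists_minimalFor_of_wellFoundedLT (· ∈ A)
    (fun z : L => (adL z).ker ⊓ ⊤) ⟨0, zero_mem _⟩
  obtain ⟨θ, hθ, hzθ⟩ := exists_mem_isometricAut_lie_eq_zero a z
  have hreg : IsRegular ℝ (θ a) := isRegular_map_of_mem_isometricAut hθ ha
  have hle : A ≤ (adL (θ a)).ker := fun x hx => by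
    have hxθ : ⁅x, θ a⁆ = 0 :=
      lie_eq_zero_of_minimalFor hz ⟨hA z hz.1 x hx, hx⟩ ⟨hzθ, trivial⟩
    change ⁅θ a, x⁆ = 0
    rw [← lie_skew, hxθ, neg_zero]
  refine ⟨θ a, hreg, (Submodule.eq_of_le_of_finrank_le hle ?_).symm⟩
  rwa [isRegular_iff_finrank_ker_adL.1 hreg]

theorem exists_isRegular_ker_adL_isOrtho [IsKilling ℝ L] {a : L} (ha : IsRegular ℝ a) :
    ∃ b : L, IsRegular ℝ b ∧ (adL a).ker ⟂ (adL b).ker := by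
  obtain ⟨φ, hφ, hφa, hdisj⟩ := exists_mem_adjointGroup_disjoint_ker_sub_one ha
  obtain ⟨A, hAφ, hA, hrank⟩ := exists_abelian_le_ker_sub_one hφ
  obtain ⟨b, hb, rfl⟩ := exists_isRegular_ker_adL_eq hA hrank
  have hnormal := isStarNormal_sub_one_of_mem_isometricAut (adjointGroup_le_isometricAut hφ)
  refine ⟨b, hb, (isOrtho_ker_of_isStarNormal hnormal (fun k hk => ?_) hdisj).mono_right hAφ⟩
  exact sub_mem (hφa k hk) hk

theorem exists_eq_lie_add_lie {a b : L} (h : Disjoint (adL a).ker (adL b).ker) (x : L) :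
    ∃ u v : L, x = ⁅a, u⁆ + ⁅b, v⁆ := by
  have htop : (adL a).range ⊔ (adL b).range = ⊤ := by
    rw [← Submodule.orthogonal_eq_bot_iff, ← Submodule.inf_orthogonal,
      ContinuousLinearMap.IsStarNormal.orthogonal_range (isStarNormal_adL a),
      ContinuousLinearMap.IsStarNormal.orthogonal_range (isStarNormal_adL b), h.eq_bot]
  obtain ⟨_, ⟨u, rfl⟩, _, ⟨v, rfl⟩, huv⟩ :=
    Submodule.mem_sup.1 (htop ▸ Submodule.mem_top : x ∈ (adL a).range ⊔ (adL b).range)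
  exact ⟨u, v, huv.symm⟩

end CompactLieAlgebra

theorem isKilling_of_killingForm_neg {L : Type*} [LieRing L] [LieAlgebra ℝ L]
    (hneg : ∀ x : L, x ≠ 0 → killingForm ℝ L x x < 0) : IsKilling ℝ L where
  killingCompl_top_eq_bot := (LieSubmodule.eq_bot_iff _).2 fun x hx => by_contra fun hne =>
    (hneg x hne).ne ((LieIdeal.mem_killingCompl ℝ L ⊤).1 hx x trivial)

/-- The inner product `-κ` on a Lie algebra with negative definite Killing form `κ`. -/
noncomputable abbrev negKillingCore {L : Type*} [LieRing L] [LieAlgebra ℝ L]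
    (hneg : ∀ x : L, x ≠ 0 → killingForm ℝ L x x < 0) : InnerProductSpace.Core ℝ L where
  inner x y := -killingForm ℝ L x y
  conj_inner_symm x y := by rw [conj_trivial, LieModule.traceForm_comm]
  re_inner_nonneg x := by
    rcases eq_or_ne x 0 with rfl | hx
    · simp
    · exact (neg_pos.2 (hneg x hx)).le
  definite x hx := by_contra fun h => (hneg x h).ne (neg_eq_zero.1 hx)
  add_left x y z := by rw [map_add, LinearMap.add_apply, neg_add]
  smul_left x y r := by simp

/-- The compact Lie algebra structure given by the inner product `-κ`. -/
noncomputable abbrev CompactLieAlgebra.ofKillingForm {L : Type*} [lieRing : LieRing L]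
    [lieAlgebra : LieAlgebra ℝ L]
    (hneg : ∀ x : L, x ≠ 0 → killingForm ℝ L x x < 0) : CompactLieAlgebra L :=
  { (negKillingCore hneg).toNormedAddCommGroup,
    InnerProductSpace.ofCore (negKillingCore hneg).toCore, lieRing, lieAlgebra with
    inner_lie_left x y z := congr_arg Neg.neg (LieModule.traceForm_apply_lie_apply' ℝ L L x y z) }

/-- Given a regular element `a` of a compact semisimple real Lie algebra `L`, there is a regular
element `b` with `L = ⁅a, L⁆ + ⁅b, L⁆`, `κ(a, b) = 0`, and the centralizers of `a` and `b`
orthogonal. -/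
theorem exists_regular_complement (L : Type*) [LieRing L] [LieAlgebra ℝ L]
    [FiniteDimensional ℝ L]
    (hneg : ∀ x : L, x ≠ 0 → killingForm ℝ L x x < 0)
    (a : L) (ha : LieAlgebra.IsRegular ℝ a) :
    ∃ b : L, LieAlgebra.IsRegular ℝ b ∧
      (∀ x : L, ∃ u v : L, x = ⁅a, u⁆ + ⁅b, v⁆) ∧
      killingForm ℝ L a b = 0 ∧
      (∀ x y : L, ⁅a, x⁆ = 0 → ⁅b, y⁆ = 0 → killingForm ℝ L x y = 0) := by
  have := isKilling_of_killingForm_neg hneg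
  let _ := CompactLieAlgebra.ofKillingForm hneg
  obtain ⟨b, hb, hab⟩ := CompactLieAlgebra.exists_isRegular_ker_adL_isOrtho ha
  have hκ (x y : L) (hx : ⁅a, x⁆ = 0) (hy : ⁅b, y⁆ = 0) : killingForm ℝ L x y = 0 :=
    neg_eq_zero.1 (Submodule.isOrtho_iff_inner_eq.1 hab x hx y hy)
  exact ⟨b, hb, CompactLieAlgebra.exists_eq_lie_add_lie hab.disjoint,
    hκ a b (lie_self a) (lie_self b), hκ⟩
end
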